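/- arXiv:1903.11497 — 2 statements merged into one kernel-verified Lean document; each statement's English description precedes it below -/
import Mathlib

section
/- Let F be a finite field with q elements, ψ : F → ℂˣ a nontrivial additive character, and n > m ≥ 1. Let π be an irreducible cuspidal representation of GL_n(F) and τ an irreducible generic representation of GL_m(F). Define S = |U_m(F)|^{-1} Σ_{g ∈ GL_m(F)} J_{π,ψ_n}(C(g)) J_{τ,ψ_m^{-1}}(g), where C(g) is the n×n block matrix with I_{n−m} in the top-right block (rows 1,…,n−m, columns m+1,…,n), g in the bottom-left block (rows n−m+1,…,n, columns 1,…,m), and zeros elsewhere, and J_{τ,ψ_m^{-1}} is the normalized Bessel function of τ with respect to the character ψ_m^{-1} of U_m(F). Then S satisfies the Rankin–Selberg functional equation: for every integer 0 ≤ k ≤ n−m−1, every ψ_n-Whittaker functional λ on π, v ∈ V, every ψ_m^{-1}-Whittaker functional μ on τ, w ∈ W, setting W_π(g) = λ(π(g)v) and W_τ(h) = μ(τ(h)w), one has S · q^{km} · |U_m(F)|^{-1} Σ_{g ∈ GL_m(F)} Σ_{x ∈ M_{(n−m−1−k)×m}(F)} W_π(A(g,x)) W_τ(g) = |U_m(F)|^{-1}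 Σ_{g ∈ GL_m(F)} Σ_{y ∈ M_{m×k}(F)} W_π(B(g,y)) W_τ(g), with A(g,x) the n×n block matrix with diagonal blocks g, I_{n−m−1−k}, I_{k+1} and x in the block below g (all other off-diagonal blocks zero), and B(g,y) the n×n block matrix with block rows of heights (n−m−k, k, m) and block columns of widths (m, n−m−k, k) given by rows [0, I_{n−m−k}, 0], [0, 0, I_k], [g, 0, y]. -/
/-!
Statement 2: the Bessel-function expression
`S = |U_m|⁻¹ ∑_g J_{π,ψ_n}(C(g)) J_{τ,ψ_m⁻¹}(g)` satisfies the Rankin–Selberg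
functional equation (Roditty, Lemma 6.1.4).
-/

open Matrix BigOperators

namespace Stmt2

variable (F : Type*) [Field F] [Fintype F] [DecidableEq F]

noncomputable instance {n : ℕ} : Fintype (GL (Fin n) F) :=
  inferInstanceAs (Fintype (Matrix (Fin n) (Fin n) F)ˣ)

/-- A matrix is upper triangular unipotent. -/
def IsUnip {n : ℕ} (u : Matrix (Fin n) (Fin n) F) : Prop :=
  (∀ i, u i i = 1) ∧ ∀ i j : Fin n, (j : ℕ) < (i : ℕ) → u i j = 0

open scoped Classical in
/-- The subgroup `U_n(F)` of upper triangular unipotent matrices, as a finset of `GL n F`. -/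
noncomputable def UnipFinset (n : ℕ) : Finset (GL (Fin n) F) :=
  Finset.univ.filter fun u => IsUnip F (u : Matrix (Fin n) (Fin n) F)

/-- The sum of the superdiagonal entries of a matrix. -/
def superdiag {n : ℕ} (u : Matrix (Fin n) (Fin n) F) : F :=
  ∑ i : Fin n, ∑ j : Fin n, if (j : ℕ) = (i : ℕ) + 1 then u i j else 0

variable {F}

/-- The character `ψ_n` of `U_n(F)`: `ψ_n(u) = ψ(u_{1,2} + ⋯ + u_{n-1,n})`. -/
noncomputable def psiN (ψ : AddChar F ℂˣ) {n : ℕ} (u : GL (Fin n) F) : ℂ :=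
  (ψ (superdiag F (u : Matrix (Fin n) (Fin n) F)) : ℂˣ)

/-- Promote a matrix to an element of `GL n F` (junk value `1` if not invertible). -/
noncomputable def toGL {n : ℕ} (M : Matrix (Fin n) (Fin n) F) : GL (Fin n) F :=
  if h : M.det ≠ 0 then Matrix.GeneralLinearGroup.mkOfDetNeZero M h else 1

/-- `lam` is a `χ`-Whittaker functional for `π`. -/
def IsWhittaker {n : ℕ} {V : Type*} [AddCommGroup V] [Module ℂ V]
    (π : Representation ℂ (GL (Fin n) F) V) (χ : GL (Fin n) F → ℂ)
    (lam : V →ₗ[ℂ] ℂ) : Prop :=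
  ∀ u : GL (Fin n) F, IsUnip F (u : Matrix (Fin n) (Fin n) F) →
    ∀ v : V, lam (π u v) = χ u * lam v

/-- `π` is irreducible: the only invariant subspaces are `⊥` and `⊤`. -/
def IsIrreducible {n : ℕ} {V : Type*} [AddCommGroup V] [Module ℂ V]
    (π : Representation ℂ (GL (Fin n) F) V) : Prop :=
  ∀ W : Submodule ℂ V, (∀ g v, v ∈ W → π g v ∈ W) → W = ⊥ ∨ W = ⊤

/-- `π` is cuspidal. -/
def IsCuspidal {n : ℕ} {V : Type*} [AddCommGroup V] [Module ℂ V]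
    (π : Representation ℂ (GL (Fin n) F) V) : Prop :=
  ∀ n₁ n₂ : ℕ, 1 ≤ n₁ → 1 ≤ n₂ → ∀ h : n₁ + n₂ = n,
    ∑ x : Matrix (Fin n₁) (Fin n₂) F,
      π (toGL (Matrix.reindex (finSumFinEquiv.trans (finCongr h))
          (finSumFinEquiv.trans (finCongr h)) (Matrix.fromBlocks 1 x 0 1))) = 0

/-- The normalized Bessel function
`J_{π,θ}(g) = |U_n(F)|⁻¹ ∑_{u ∈ U_n(F)} χ_π(gu) θ(u)⁻¹`. -/
noncomputable def Bessel {n : ℕ} {V : Type*} [AddCommGroup V] [Module ℂ V]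
    (π : Representation ℂ (GL (Fin n) F) V) (θ : GL (Fin n) F → ℂ)
    (g : GL (Fin n) F) : ℂ :=
  ((UnipFinset F n).card : ℂ)⁻¹ *
    ∑ u ∈ UnipFinset F n, LinearMap.trace ℂ V (π (g * u)) * (θ u)⁻¹

/-- The block matrix `A(g,x)` as in the functional equation. -/
def Amat {n m k : ℕ} (hm : m < n) (hk : k ≤ n - m - 1)
    (g : Matrix (Fin m) (Fin m) F) (x : Matrix (Fin (n - m - 1 - k)) (Fin m) F) :
    Matrix (Fin n) (Fin n) F := fun i j =>
  if hi : (i : ℕ) < m then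
    if hj : (j : ℕ) < m then g ⟨i, hi⟩ ⟨j, hj⟩ else 0
  else
    if hj : (j : ℕ) < m then
      if hik : (i : ℕ) < n - k - 1 then
        x ⟨(i : ℕ) - m, by omega⟩ ⟨j, hj⟩
      else 0
    else if (i : ℕ) = (j : ℕ) then 1 else 0

/-- The block matrix `B(g,y)` as in the functional equation. -/
def Bmat {n m k : ℕ} (hm : m < n) (hk : k ≤ n - m - 1)
    (g : Matrix (Fin m) (Fin m) F) (y : Matrix (Fin m) (Fin k) F) :
    Matrix (Fin n) (Fin n) F := fun i j =>
  if hi : (i : ℕ) < n - m then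
    if (j : ℕ) = (i : ℕ) + m then 1 else 0
  else
    if hj : (j : ℕ) < m then g ⟨(i : ℕ) - (n - m), by omega⟩ ⟨j, hj⟩
    else if hj2 : n - k ≤ (j : ℕ) then
      y ⟨(i : ℕ) - (n - m), by omega⟩ ⟨(j : ℕ) - (n - k), by omega⟩
    else 0

/-- The block matrix `C(g)` with `I_{n-m}` in the top-right block and `g` in the
bottom-left block. -/
def Cmat {n m : ℕ} (hm : m < n) (g : Matrix (Fin m) (Fin m) F) :
    Matrix (Fin n) (Fin n) F := fun i j =>
  if hi : (i : ℕ) < n - m then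
    if (j : ℕ) = (i : ℕ) + m then 1 else 0
  else
    if hj : (j : ℕ) < m then g ⟨(i : ℕ) - (n - m), by omega⟩ ⟨j, hj⟩ else 0

/-!
Irreducibility of `π` and uniqueness of Whittaker functionals give a vector `v₀` with
`λ(v₀) = 1` and `π(u) v₀ = ψ_n(u) v₀` for `u ∈ U_n`, and then `J_{π,ψ_n}(g) = λ(π(g) v₀)`;
similarly for `τ`, `μ` and a vector `w₀`. Both sides of the functional equation are bilinear forms
in `(v, w)` that are invariant under `GL_m` and under the lower unipotent matrices with `m` columns
occurring in `A(g,x)`, and that are Whittaker in `v` for the last columns. Such forms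
are proportional: by cuspidality (Gelfand–Kazhdan descent along the mirabolic subgroups), a
functional that is Whittaker for the last columns is determined by its values on the translates
of `v₀` under a smaller mirabolic subgroup, where the values of the two forms are supported on the
double cosets meeting `U_n`. The constant is found by evaluating the forms at `(v₀, w₀)`: the
left-hand sum gives `|U_m|`, since `λ(π(p) v₀)` vanishes for `p` in the mirabolic subgroup outside
`U_n`, and the right-hand one gives `q^{km}` times the sum of products of Bessel functions.
-/

section Unipotent

variable {K : Type*} [Field K] {n : ℕ}

lemma IsUnip.isUpperTriangular {u : Matrix (Fin n) (Fin n) K} (hu : IsUnip K u) :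
    u.IsUpperTriangular :=
  fun i j hij => hu.2 i j hij

lemma IsUnip.det_eq_one {u : Matrix (Fin n) (Fin n) K} (hu : IsUnip K u) : u.det = 1 := by
  simp [Matrix.det_of_isUpperTriangular hu.isUpperTriangular, hu.1]

lemma mul_apply_diag_of_isUpperTriangular {ι R : Type*} [Fintype ι] [LinearOrder ι]
    [NonUnitalNonAssocSemiring R] {u v : Matrix ι ι R} (hu : u.IsUpperTriangular)
    (hv : v.IsUpperTriangular) (i : ι) : (u * v) i i = u i i * v i i := by
  rw [Matrix.mul_apply, Finset.sum_eq_single i _ (by simp)]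
  intro k _ hk
  rcases hk.lt_or_gt with h | h
  · rw [hu h, zero_mul]
  · rw [hv h, mul_zero]

lemma IsUnip.one : IsUnip K (1 : Matrix (Fin n) (Fin n) K) :=
  ⟨Matrix.one_apply_eq, fun _ _ hij => Matrix.blockTriangular_one (b := id) hij⟩

lemma IsUnip.mul {u v : Matrix (Fin n) (Fin n) K} (hu : IsUnip K u) (hv : IsUnip K v) :
    IsUnip K (u * v) := by
  refine ⟨fun i => ?_, fun i j hij => hu.isUpperTriangular.mul hv.isUpperTriangular hij⟩
  rw [mul_apply_diag_of_isUpperTriangular hu.isUpperTriangular hv.isUpperTriangular, hu.1, hv.1,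
    one_mul]

lemma IsUnip.inv {u : GL (Fin n) K} (hu : IsUnip K u.val) : IsUnip K u⁻¹.val := by
  have hinv : u⁻¹.val.IsUpperTriangular := by
    rw [Matrix.coe_units_inv]
    have := u.invertible
    exact Matrix.blockTriangular_inv_of_blockTriangular hu.isUpperTriangular
  refine ⟨fun i => ?_, fun i j hij => hinv hij⟩
  have h := mul_apply_diag_of_isUpperTriangular hu.isUpperTriangular hinv i
  rwa [Units.mul_inv, Matrix.one_apply_eq, hu.1, one_mul, eq_comm] at h

variable (K n) in
/-- The group `U_n(K)` of upper triangular unipotent matrices as a subgroup of `GL_n(K)`; the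
finset `UnipFinset` enumerates it when `K` is finite. -/
def unipotent : Subgroup (GL (Fin n) K) where
  carrier := {u | IsUnip K u.val}
  one_mem' := IsUnip.one
  mul_mem' := IsUnip.mul
  inv_mem' := IsUnip.inv

lemma mem_unipotent {u : GL (Fin n) K} : u ∈ unipotent K n ↔ IsUnip K u.val := Iff.rfl

lemma IsUnip.mul_apply_succ {u v : Matrix (Fin n) (Fin n) K} (hu : IsUnip K u) (hv : IsUnip K v)
    {i j : Fin n} (hij : (j : ℕ) = i + 1) : (u * v) i j = u i j + v i j := by
  have hne : i ≠ j := fun h => by simp [h] at hij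
  rw [Matrix.mul_apply, Fintype.sum_eq_add i j hne, hu.1, hv.1, one_mul, mul_one, add_comm]
  rintro k ⟨hki, hkj⟩
  rw [ne_eq, Fin.ext_iff] at hki hkj
  rcases lt_or_ge (k : ℕ) i with h | h
  · rw [hu.2 i k h, zero_mul]
  · rw [hv.2 k j (by lia), mul_zero]

lemma superdiag_mul {u v : Matrix (Fin n) (Fin n) K} (hu : IsUnip K u) (hv : IsUnip K v) :
    superdiag K (u * v) = superdiag K u + superdiag K v := by
  simp only [superdiag, ← Finset.sum_add_distrib]
  refine Finset.sum_congr rfl fun i _ => Finset.sum_congr rfl fun j _ => ?_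
  split_ifs with h
  · exact hu.mul_apply_succ hv h
  · rw [add_zero]

lemma superdiag_add (M N : Matrix (Fin n) (Fin n) K) :
    superdiag K (M + N) = superdiag K M + superdiag K N := by
  simp only [superdiag, ← Finset.sum_add_distrib, ite_add_ite, Matrix.add_apply, add_zero]

lemma superdiag_one : superdiag K (1 : Matrix (Fin n) (Fin n) K) = 0 := by
  simpa using superdiag_mul (K := K) (n := n) IsUnip.one IsUnip.one

lemma superdiag_eq_zero {M : Matrix (Fin n) (Fin n) K}
    (h : ∀ i j : Fin n, (j : ℕ) = i + 1 → M i j = 0) : superdiag K M = 0 := by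
  refine Finset.sum_eq_zero fun i _ => Finset.sum_eq_zero fun j _ => ?_
  split_ifs with hij
  exacts [h i j hij, rfl]

lemma superdiag_eq_apply {M : Matrix (Fin n) (Fin n) K} {i j : Fin n} (hij : (j : ℕ) = i + 1)
    (h : ∀ a b : Fin n, (b : ℕ) = a + 1 → b ≠ j → M a b = 0) : superdiag K M = M i j := by
  rw [superdiag, Finset.sum_eq_single i, Finset.sum_eq_single j, if_pos hij]
  · intro b _ hb
    rw [if_neg fun h' => hb (Fin.ext (h'.trans hij.symm))]
  · simp
  · intro a _ ha
    refine Finset.sum_eq_zero fun b _ => ?_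
    split_ifs with hab
    · refine h a b hab ?_
      rintro rfl
      exact ha (Fin.ext (by lia))
    · rfl
  · simp

/-- The character `ψ_n` on the subgroup `U_n(K)`, where, unlike `psiN`, it is a homomorphism. -/
def unipChar (ψ : AddChar K ℂˣ) : unipotent K n →* ℂˣ where
  toFun u := ψ (superdiag K u.1.val)
  map_one' := by simp [superdiag_one]
  map_mul' u v := by
    rw [Subgroup.coe_mul, Units.val_mul, superdiag_mul u.2 v.2, AddChar.map_add_eq_mul]

lemma coe_unipChar (ψ : AddChar K ℂˣ) (u : unipotent K n) : (unipChar ψ u : ℂ) = psiN ψ u.1 :=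
  rfl

lemma psiN_ne_zero (ψ : AddChar K ℂˣ) (u : GL (Fin n) K) : psiN ψ u ≠ 0 :=
  Units.ne_zero _

lemma psiN_inv_eq (ψ : AddChar K ℂˣ) (u : GL (Fin n) K) : (psiN ψ u)⁻¹ = psiN ψ⁻¹ u := by
  simp [psiN, AddChar.inv_apply, AddChar.map_neg_eq_inv]

lemma psiN_inv (ψ : AddChar K ℂˣ) {u : GL (Fin n) K} (hu : IsUnip K u.val) :
    psiN ψ u⁻¹ = (psiN ψ u)⁻¹ := by
  rw [← coe_unipChar ψ ⟨u, hu⟩, ← Units.val_inv_eq_inv_val, ← map_inv]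
  rfl

lemma psiN_mul (ψ : AddChar K ℂˣ) {u v : GL (Fin n) K} (hu : IsUnip K u.val)
    (hv : IsUnip K v.val) : psiN ψ (u * v) = psiN ψ u * psiN ψ v := by
  rw [psiN, Units.val_mul, superdiag_mul hu hv, AddChar.map_add_eq_mul, Units.val_mul]
  rfl

lemma psiN_congr (ψ : AddChar K ℂˣ) {m : ℕ} {u : GL (Fin n) K} {v : GL (Fin m) K}
    (h : superdiag K u.val = superdiag K v.val) : psiN ψ u = psiN ψ v := by
  rw [psiN, h, psiN]

section ToGL

variable [DecidableEq K]

lemma toGL_val {M : Matrix (Fin n) (Fin n) K} (h : M.det ≠ 0) : (toGL M).val = M := by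
  rw [toGL, dif_pos h]
  rfl

lemma toGL_val_of_mul_eq_one {M N : Matrix (Fin n) (Fin n) K} (h : M * N = 1) :
    (toGL M).val = M :=
  toGL_val ((Matrix.isUnit_iff_isUnit_det M).1 (IsUnit.of_mul_eq_one N h)).ne_zero

lemma toGL_coe (g : GL (Fin n) K) : toGL g.val = g :=
  Units.ext (toGL_val g.det_ne_zero)

lemma IsUnip.toGL_val {u : Matrix (Fin n) (Fin n) K} (hu : IsUnip K u) : (toGL u).val = u :=
  Stmt2.toGL_val (by simp [hu.det_eq_one])

end ToGL

end Unipotent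

section AdditiveCharacter

lemma eq_of_forall_addChar_mul_eq {R M : Type*} [CommRing R] [CommMonoid M] {ψ : AddChar R M}
    (hψ : ψ.IsPrimitive) {a b : R} (h : ∀ t, ψ (t * a) = ψ (t * b)) : a = b := by
  refine AddChar.to_mulShift_inj_of_isPrimitive hψ (AddChar.ext _ _ fun t => ?_)
  simpa [AddChar.mulShift_apply, mul_comm] using h t

lemma sum_addChar_dotProduct {ι R R' : Type*} [Fintype ι] [DecidableEq ι] [CommRing R] [Fintype R]
    [DecidableEq R] [CommRing R'] [IsDomain R'] {ψ : AddChar R R'} (hψ : ψ.IsPrimitive)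
    (y : ι → R) :
    ∑ a : ι → R, ψ (a ⬝ᵥ y) = if y = 0 then (Fintype.card R : R') ^ Fintype.card ι else 0 := by
  split_ifs with hy
  · simp [hy]
  · let dot : (ι → R) →+ R := AddMonoidHom.mk' (· ⬝ᵥ y) fun a b => add_dotProduct a b y
    suffices ψ.compAddMonoidHom dot ≠ 1 from AddChar.sum_eq_zero_of_ne_one this
    obtain ⟨i, hi⟩ := Function.ne_iff.1 hy
    obtain ⟨t, ht⟩ := AddChar.ne_one_iff.1 (hψ hi)
    exact AddChar.ne_one_iff.2 ⟨Pi.single i t, by simpa [dot, mul_comm t] using ht⟩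

end AdditiveCharacter

section MultiplicityOne

variable {G V E : Type*} [Group G] [AddCommGroup V] [Module ℂ V] [AddCommGroup E] [Module ℂ E]
  {H : Subgroup G}

/-- A function on `G` that transforms on both sides under `H` by the character `θ`, as the elements
of the Hecke algebra of `(G, H, θ)` do. -/
def IsBiequivariant (θ : H →* ℂˣ) (Φ : G → E) : Prop :=
  ∀ (u : H) (g : G), Φ (u * g) = (θ u : ℂ) • Φ g ∧ Φ (g * u) = (θ u : ℂ) • Φ g

variable [Fintype H] (π : Representation ℂ G V) (θ : H →* ℂˣ)

/-- The projection of `π` onto the subspace on which `H` acts by the character `θ`. -/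
noncomputable def isotypicProj : Module.End ℂ V :=
  (Fintype.card H : ℂ)⁻¹ • ∑ u : H, (θ u : ℂ)⁻¹ • π u

/-- The operator by which `g` acts on the image of `isotypicProj π θ`. -/
noncomputable def compression (g : G) : Module.End ℂ V :=
  isotypicProj π θ * π g * isotypicProj π θ

lemma map_mul_isotypicProj (u : H) :
    π u * isotypicProj π θ = (θ u : ℂ) • isotypicProj π θ := by
  rw [isotypicProj, mul_smul_comm, smul_comm]
  congr 1
  rw [Finset.mul_sum, Finset.smul_sum]
  refine Fintype.sum_equiv (Equiv.mulLeft u) _ _ fun x => ?_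
  simp only [Equiv.coe_mulLeft, Subgroup.coe_mul, map_mul, Units.val_mul, smul_smul, mul_inv,
    mul_smul_comm]
  rw [mul_inv_cancel_left₀ (θ u).ne_zero]

lemma isotypicProj_mul_map (u : H) :
    isotypicProj π θ * π u = (θ u : ℂ) • isotypicProj π θ := by
  rw [isotypicProj, smul_mul_assoc, smul_comm]
  congr 1
  rw [Finset.sum_mul, Finset.smul_sum]
  refine Fintype.sum_equiv (Equiv.mulRight u) _ _ fun x => ?_
  simp only [Equiv.coe_mulRight, Subgroup.coe_mul, map_mul, Units.val_mul, smul_smul, mul_inv,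
    smul_mul_assoc]
  rw [mul_comm (θ x : ℂ)⁻¹, mul_inv_cancel_left₀ (θ u).ne_zero]

lemma apply_isotypicProj {ν : V →ₗ[ℂ] E} (hν : ∀ (u : H) (v : V), ν (π u v) = (θ u : ℂ) • ν v)
    (v : V) : ν (isotypicProj π θ v) = ν v := by
  have hcard : (Fintype.card H : ℂ) ≠ 0 := Nat.cast_ne_zero.2 Fintype.card_ne_zero
  simp [isotypicProj, hν, smul_smul, ← Nat.cast_smul_eq_nsmul ℂ, hcard]

lemma isotypicProj_apply_isotypicProj (v : V) :
    isotypicProj π θ (isotypicProj π θ v) = isotypicProj π θ v :=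
  apply_isotypicProj π θ (fun u v => LinearMap.congr_fun (isotypicProj_mul_map π θ u) v) v

lemma isBiequivariant_compression : IsBiequivariant θ (compression π θ) := by
  refine fun u g => ⟨?_, ?_⟩
  · simp only [compression, map_mul, ← mul_assoc, isotypicProj_mul_map, smul_mul_assoc]
  · simp only [compression, map_mul, mul_assoc, map_mul_isotypicProj, mul_smul_comm]

lemma compression_mul (g h : G) : compression π θ g * compression π θ h =
    (Fintype.card H : ℂ)⁻¹ • ∑ u : H, (θ u : ℂ)⁻¹ • compression π θ (g * u * h) := by
  have hidem : compression π θ g * compression π θ h =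
      isotypicProj π θ * π g * isotypicProj π θ * π h * isotypicProj π θ := by
    ext v
    simp [compression, isotypicProj_apply_isotypicProj]
  rw [hidem]
  nth_rw 2 [isotypicProj]
  simp only [compression, map_mul, Finset.mul_sum, Finset.sum_mul, mul_smul_comm, smul_mul_assoc,
    mul_assoc]

variable {θ}

/-- Gelfand's trick: an anti-involution that fixes every biequivariant function makes the Hecke
algebra commutative. -/
lemma commute_compression {ι : G → G} (hι : Function.Involutive ι)
    (hmul : ∀ g h, ι (g * h) = ι h * ι g) (hH : ∀ g ∈ H, ι g ∈ H)
    (hθ : ∀ u : H, θ ⟨ι u, hH u u.2⟩ = θ u)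
    (hΦ : ∀ Φ : G → Module.End ℂ V, IsBiequivariant θ Φ → ∀ g, Φ (ι g) = Φ g) (g h : G) :
    Commute (compression π θ g) (compression π θ h) := by
  have hinv := hΦ _ (isBiequivariant_compression π θ)
  let ιH : H ≃ H := Function.Involutive.toPerm (fun u => ⟨ι u, hH u u.2⟩) fun u =>
    Subtype.ext (hι u)
  have hterm (u : H) : (θ (ιH u) : ℂ)⁻¹ • compression π θ (ι g * ιH u * ι h) =
      (θ u : ℂ)⁻¹ • compression π θ (h * u * g) := by
    rw [show θ (ιH u) = θ u from hθ u, show ((ιH u : H) : G) = ι u from rfl, mul_assoc, ← hmul,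
      ← hmul, hinv]
  rw [commute_iff_eq, ← hinv g, ← hinv h, compression_mul, ← ιH.sum_comp,
    Finset.sum_congr rfl fun u _ => hterm u, ← compression_mul, hinv, hinv]

variable {π}

lemma span_orbit_eq_top (hπ : ∀ W : Submodule ℂ V, (∀ g v, v ∈ W → π g v ∈ W) → W = ⊥ ∨ W = ⊤)
    {v : V} (hv : v ≠ 0) : Submodule.span ℂ (Set.range fun g => π g v) = ⊤ := by
  have hmem (g : G) : π g v ∈ Submodule.span ℂ (Set.range fun g => π g v) :=
    Submodule.subset_span ⟨g, rfl⟩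
  refine (hπ _ fun g x hx => ?_).resolve_left fun hbot => hv ?_
  · refine (Submodule.span_le (p := (Submodule.span ℂ _).comap (π g))).2 ?_ hx
    rintro _ ⟨h, rfl⟩
    simpa using hmem (g * h)
  · simpa [hbot] using hmem 1

lemma isotypicProj_mem_of_compression_mem
    (hπ : ∀ W : Submodule ℂ V, (∀ g v, v ∈ W → π g v ∈ W) → W = ⊥ ∨ W = ⊤) {v : V} (hv : v ≠ 0)
    (hev : isotypicProj π θ v = v) {W : Submodule ℂ V} (hW : ∀ g, compression π θ g v ∈ W)
    (x : V) : isotypicProj π θ x ∈ W := by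
  have hx : x ∈ Submodule.span ℂ (Set.range fun g => π g v) := by simp [span_orbit_eq_top hπ hv]
  refine (Submodule.span_le (p := W.comap (isotypicProj π θ))).2 ?_ hx
  rintro _ ⟨g, rfl⟩
  simpa [compression, hev] using hW g

/-- An eigenvector of one compression generates the image of the projection under all of them, so
commuting compressions act on this image by scalars (Schur's lemma). -/
lemma exists_compression_apply_eq_smul [FiniteDimensional ℂ V]
    (hπ : ∀ W : Submodule ℂ V, (∀ g v, v ∈ W → π g v ∈ W) → W = ⊥ ∨ W = ⊤)
    (hcomm : ∀ g h, Commute (compression π θ g) (compression π θ h)) {v : V} (hv : v ≠ 0)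
    (hev : isotypicProj π θ v = v) (g : G) : ∃ a : ℂ, compression π θ g v = a • v := by
  have hR : ∀ x ∈ LinearMap.range (isotypicProj π θ),
      compression π θ g x ∈ LinearMap.range (isotypicProj π θ) := fun x _ => ⟨_, rfl⟩
  have : Nontrivial (LinearMap.range (isotypicProj π θ)) :=
    nontrivial_of_ne ⟨v, v, hev⟩ 0 fun h => hv (congrArg Subtype.val h)
  obtain ⟨a, ha⟩ := Module.End.exists_eigenvalue ((compression π θ g).restrict hR)
  obtain ⟨⟨_, y, rfl⟩, hx⟩ := ha.exists_hasEigenvector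
  have hx0 : isotypicProj π θ y ≠ 0 := fun h => hx.2 (Subtype.ext h)
  have hgx : compression π θ g (isotypicProj π θ y) = a • isotypicProj π θ y :=
    congrArg Subtype.val hx.apply_eq_smul
  refine ⟨a, ?_⟩
  rw [← hev]
  refine isotypicProj_mem_of_compression_mem (W := LinearMap.eqLocus (compression π θ g) (a • 1))
    hπ hx0 (isotypicProj_apply_isotypicProj π θ y) (fun h => ?_) v
  rw [LinearMap.mem_eqLocus, LinearMap.smul_apply, Module.End.one_apply, ← map_smul, ← hgx]
  exact LinearMap.congr_fun (hcomm g h) _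

end MultiplicityOne

section Antitranspose

variable {K : Type*} [Field K] {n : ℕ}

/-- Reflection in the antidiagonal: the anti-involution of `GL_n` used in Gelfand's trick, since it
preserves `U_n` and `ψ_n`. -/
def antitranspose (g : GL (Fin n) K) : GL (Fin n) K where
  val := (g.val.submatrix Fin.revPerm Fin.revPerm)ᵀ
  inv := (g⁻¹.val.submatrix Fin.revPerm Fin.revPerm)ᵀ
  val_inv := by
    rw [← Matrix.transpose_mul, Matrix.submatrix_mul_equiv, Units.inv_mul]
    simp
  inv_val := by
    rw [← Matrix.transpose_mul, Matrix.submatrix_mul_equiv, Units.mul_inv]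
    simp

lemma antitranspose_apply (g : GL (Fin n) K) (i j : Fin n) :
    (antitranspose g).val i j = g.val j.rev i.rev :=
  rfl

lemma antitranspose_involutive : Function.Involutive (antitranspose : GL (Fin n) K → _) :=
  fun g => Matrix.GeneralLinearGroup.ext fun i j => by simp [antitranspose_apply]

lemma antitranspose_mul (g h : GL (Fin n) K) :
    antitranspose (g * h) = antitranspose h * antitranspose g := by
  refine Units.ext ?_
  simp only [antitranspose, Units.val_mul, ← Matrix.transpose_mul, Matrix.submatrix_mul_equiv]

lemma IsUnip.antitranspose {u : GL (Fin n) K} (hu : IsUnip K u.val) :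
    IsUnip K (antitranspose u).val :=
  ⟨fun i => hu.1 i.rev, fun i j hij => hu.2 j.rev i.rev (by simp only [Fin.val_rev]; lia)⟩

lemma superdiag_antitranspose (g : GL (Fin n) K) :
    superdiag K (antitranspose g).val = superdiag K g.val := by
  rw [superdiag, superdiag, Finset.sum_comm, ← Equiv.sum_comp Fin.revPerm]
  refine Finset.sum_congr rfl fun i _ => ?_
  rw [← Equiv.sum_comp Fin.revPerm]
  refine Finset.sum_congr rfl fun j _ => ?_
  simp only [antitranspose_apply, Fin.revPerm_apply, Fin.rev_rev, Fin.val_rev]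
  exact if_congr (by lia) rfl rfl

end Antitranspose

section Bruhat

variable {K : Type*} [Field K] {n : ℕ}

lemma isUnip_one_add {N : Matrix (Fin n) (Fin n) K} (hN : ∀ i j : Fin n, j ≤ i → N i j = 0) :
    IsUnip K (1 + N) := by
  refine ⟨fun i => by simp [hN i i le_rfl], fun i j hij => ?_⟩
  rw [Matrix.add_apply, IsUnip.one.2 i j hij, hN i j (Fin.le_def.2 hij.le), add_zero]

lemma superdiag_one_add (N : Matrix (Fin n) (Fin n) K) :
    superdiag K (1 + N) = superdiag K N := by
  rw [superdiag_add, superdiag_one, zero_add]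

lemma exists_last_ne_zero (g : GL (Fin n) K) (b : Fin n) :
    ∃ r, g.val r b ≠ 0 ∧ ∀ i, r < i → g.val i b = 0 := by
  have hne : {i | g.val i b ≠ 0}.Nonempty := by
    by_contra hcol
    refine g.det_ne_zero (Matrix.det_eq_zero_of_column_eq_zero b fun i => ?_)
    by_contra hi
    exact hcol ⟨i, hi⟩
  obtain ⟨r, hr, hmax⟩ := wellFounded_gt.has_min _ hne
  exact ⟨r, hr, fun i hi => not_not.1 fun h => hmax i h hi⟩

/-- The row operations above `r` and the column operations to the right of `b` that use the pivot
`(r, b)` replace `M` by a Schur complement. -/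
lemma exists_isUnip_mul_mul_eq_schur {M : Matrix (Fin n) (Fin n) K} {r b : Fin n} (hrb : M r b ≠ 0)
    (hcol : ∀ i, r < i → M i b = 0) (hrow : ∀ k < b, M r k = 0) :
    ∃ u u' : Matrix (Fin n) (Fin n) K, IsUnip K u ∧ IsUnip K u' ∧ ∀ i k, (u * M * u') i k =
      if i = r then if k = b then M r b else 0 else M i k - M i b * M r k / M r b := by
  let x : Fin n → K := fun i => if i = r then 0 else -(M i b / M r b)
  let y : Fin n → K := fun k => if k = b then 0 else -(M r k / M r b)
  refine ⟨1 + vecMulVec x (Pi.single r 1), 1 + vecMulVec (Pi.single b 1) y,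
    isUnip_one_add fun i k hki => ?_, isUnip_one_add fun i k hki => ?_, fun i k => ?_⟩
  · rw [vecMulVec_apply]
    rcases eq_or_ne k r with rfl | hk
    · rcases hki.eq_or_lt with rfl | h
      · simp [x]
      · simp [x, hcol i h]
    · simp [hk]
  · rw [vecMulVec_apply]
    rcases eq_or_ne i b with rfl | hi
    · rcases hki.eq_or_lt with rfl | h
      · simp [y]
      · simp [y, hrow k h]
    · simp [hi]
  · have hl (i k : Fin n) :
        ((1 + vecMulVec x (Pi.single r 1)) * M) i k = M i k + x i * M r k := by
      simp [add_mul, vecMulVec_mul, vecMulVec_apply]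
    rw [mul_add, mul_one, Matrix.add_apply, mul_vecMulVec, vecMulVec_apply]
    simp only [mulVec_single, MulOpposite.op_one, one_smul, Matrix.col_apply, hl, x, y]
    split_ifs <;> simp_all <;> field_simp <;> ring

/-- Column `b` of `M` has a unique nonzero entry, and that entry is alone in its row. -/
def IsPivotColumn (M : Matrix (Fin n) (Fin n) K) (b : Fin n) : Prop :=
  ∃ r, M r b ≠ 0 ∧ (∀ i, i ≠ r → M i b = 0) ∧ ∀ k, k ≠ b → M r k = 0

lemma exists_isUnip_forall_lt_isPivotColumn (g : GL (Fin n) K) (j : ℕ) (hj : j ≤ n) :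
    ∃ u u' : Matrix (Fin n) (Fin n) K, IsUnip K u ∧ IsUnip K u' ∧
      ∀ b : Fin n, (b : ℕ) < j → IsPivotColumn (u * g.val * u') b := by
  classical
  induction j with
  | zero => exact ⟨1, 1, .one, .one, by simp⟩
  | succ j ih =>
    obtain ⟨u, u', hu, hu', hpiv⟩ := ih (by lia)
    let h : GL (Fin n) K := toGL u * g * toGL u'
    have hval : h.val = u * g.val * u' := by simp [h, hu.toGL_val, hu'.toGL_val]
    rw [← hval] at hpiv
    let c : Fin n := ⟨j, hj⟩
    obtain ⟨r, hr, hcol⟩ := exists_last_ne_zero h c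
    have hrow : ∀ k < c, h.val r k = 0 := fun k hk => by
      obtain ⟨s, -, hs, hs'⟩ := hpiv k hk
      exact hs r fun hrs => hr (hrs ▸ hs' c hk.ne')
    obtain ⟨v, v', hv, hv', hschur⟩ := exists_isUnip_mul_mul_eq_schur hr hcol hrow
    refine ⟨v * u, u' * v', hv.mul hu, hu'.mul hv', fun b hb => ?_⟩
    rw [show v * u * g.val * (u' * v') = v * h.val * v' by simp only [hval, mul_assoc]]
    rcases eq_or_ne b c with rfl | hbc
    · exact ⟨r, by simp [hschur, hr], fun i hi => by simp [hschur, hi, hr],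
        fun k hk => by simp [hschur, hk]⟩
    · have hbc' : b < c := lt_of_le_of_ne (Nat.lt_succ_iff.1 hb) hbc
      obtain ⟨s, hs, hscol, hsrow⟩ := hpiv b hbc'
      have hsr : s ≠ r := fun h => hr (h ▸ hsrow c hbc'.ne')
      refine ⟨s, by simpa [hschur, hsr, hrow b hbc'] using hs, fun i hi => ?_, fun k hk => ?_⟩
      · simp [hschur, hrow b hbc', hscol i hi, hbc]
      · simp [hschur, hsr, hsrow k hk, hsrow c hbc'.ne']

/-- The Bruhat decomposition. -/
theorem exists_isUnip_mul_mul_eq_monomial (g : GL (Fin n) K) :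
    ∃ u u' : GL (Fin n) K, IsUnip K u.val ∧ IsUnip K u'.val ∧
      ∃ (w : Equiv.Perm (Fin n)) (c : Fin n → K), (∀ b, c b ≠ 0) ∧
        ∀ i b, (u * g * u').val i b = if i = w b then c b else 0 := by
  classical
  obtain ⟨u, u', hu, hu', hpiv⟩ := exists_isUnip_forall_lt_isPivotColumn g n le_rfl
  choose w hw hcol hrow using fun b : Fin n => hpiv b b.2
  have hinj : Function.Injective w := fun a b hab => by
    by_contra hne
    exact hw a (hab ▸ hrow b a hne)
  refine ⟨toGL u, toGL u', by rwa [hu.toGL_val], by rwa [hu'.toGL_val],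
    Equiv.ofBijective w (Finite.injective_iff_bijective.1 hinj), _, hw, fun i b => ?_⟩
  simp only [Units.val_mul, hu.toGL_val, hu'.toGL_val, Equiv.ofBijective_apply]
  split_ifs with h
  · rw [h]
  · exact hcol b i h

end Bruhat

section LayeredPerm

variable {n : ℕ} {σ : Equiv.Perm (Fin n)}

/-- Layered permutations, the direct sums of order-reversing permutations, characterized through
their inversions: two positions are adjacent if and only if their values are. -/
def IsLayered (σ : Equiv.Perm (Fin n)) : Prop :=
  ∀ a b : Fin n, a < b → σ b < σ a → ((b : ℕ) = a + 1 ↔ (σ a : ℕ) = σ b + 1)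

lemma IsLayered.apply_add_eq (hσ : IsLayered σ) (s t : Fin n) (hst : s ≤ t) (hts : t ≤ σ s) :
    (σ t + t : ℕ) = σ s + s := by
  induction s using WellFoundedLT.induction generalizing t with
  | _ s ihs =>
  induction t using WellFoundedLT.induction with
  | _ t iht =>
  rcases hst.eq_or_lt with rfl | hlt
  · rfl
  rw [Fin.lt_def] at hlt
  rw [Fin.le_def] at hst hts
  let p : Fin n := ⟨t - 1, by lia⟩
  have hp : (p : ℕ) + 1 = t := Nat.sub_add_cancel (by lia)
  have hσp : (σ p + p : ℕ) = σ s + s :=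
    iht p (Fin.lt_def.2 (by lia)) (Fin.le_def.2 (by lia)) (Fin.le_def.2 (by lia))
  obtain ⟨b, hb⟩ := σ.surjective ⟨σ p - 1, by lia⟩
  have hσb : (σ b : ℕ) + 1 = σ p := by
    rw [hb]
    exact Nat.sub_add_cancel (by lia)
  suffices (b : ℕ) = t by
    rw [← Fin.ext this]
    lia
  rcases lt_trichotomy b p with hbp | rfl | hpb
  · rw [Fin.lt_def] at hbp
    rcases lt_or_ge b s with hbs | hsb
    · have := ihs b hbs s hbs.le (Fin.le_def.2 (by lia))
      lia
    · have := iht b (Fin.lt_def.2 (by lia)) hsb (Fin.le_def.2 (by lia))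
      lia
  · lia
  · have := (hσ p b hpb (Fin.lt_def.2 (by lia))).2 hσb.symm
    lia

lemma IsLayered.eq_of_le_apply {α : Type*} {c : Fin n → α} (hσ : IsLayered σ)
    (hc : ∀ a b : Fin n, (b : ℕ) = a + 1 → σ b < σ a → c a = c b) (s t : Fin n) (hst : s ≤ t)
    (hts : t ≤ σ s) : c t = c s := by
  induction t using WellFoundedLT.induction with
  | _ t iht =>
  rcases hst.eq_or_lt with rfl | hlt
  · rfl
  have hσt := hσ.apply_add_eq s t hst hts
  rw [Fin.lt_def] at hlt
  rw [Fin.le_def] at hst hts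
  let p : Fin n := ⟨t - 1, by lia⟩
  have hp : (p : ℕ) + 1 = t := Nat.sub_add_cancel (by lia)
  have hsp : s ≤ p := Fin.le_def.2 (by lia)
  have hps : p ≤ σ s := Fin.le_def.2 (by lia)
  have hσp := hσ.apply_add_eq s p hsp hps
  rw [← iht p (Fin.lt_def.2 (by lia)) hsp hps]
  exact (hc p t hp.symm (Fin.lt_def.2 (by lia))).symm

lemma IsLayered.apply_apply {α : Type*} {c : Fin n → α} (hσ : IsLayered σ)
    (hc : ∀ a b : Fin n, (b : ℕ) = a + 1 → σ b < σ a → c a = c b) (s : Fin n) :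
    σ (σ s) = s ∧ c (σ s) = c s := by
  induction s using WellFoundedLT.induction with
  | _ s ih =>
  rcases le_or_gt s (σ s) with h | h
  · have := hσ.apply_add_eq s (σ s) h le_rfl
    exact ⟨Fin.ext (by lia), hσ.eq_of_le_apply hc s (σ s) h le_rfl⟩
  · obtain ⟨hinv, hval⟩ := ih (σ s) h
    rw [σ.injective hinv] at hval ⊢
    exact ⟨rfl, hval.symm⟩

end LayeredPerm

section Relevant

variable {K : Type*} [Field K] {n : ℕ} {ψ : AddChar K ℂˣ}

lemma superdiag_transvection (a b : Fin n) (t : K) :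
    superdiag K (Matrix.transvection a b t) = if (b : ℕ) = a + 1 then t else 0 := by
  rw [Matrix.transvection, superdiag_one_add]
  split_ifs with h
  · rw [superdiag_eq_apply h fun i j _ hj => Matrix.single_apply_of_col_ne a i hj.symm t,
      Matrix.single_apply_same]
  · refine superdiag_eq_zero fun i j hij => Matrix.single_apply_of_ne a b t i j ?_
    rintro ⟨rfl, rfl⟩
    exact h hij

lemma isUnip_transvection {a b : Fin n} (hab : a < b) (t : K) :
    IsUnip K (Matrix.transvection a b t) := by
  refine isUnip_one_add fun i j hji => Matrix.single_apply_of_ne a b t i j ?_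
  rintro ⟨rfl, rfl⟩
  exact hab.not_ge hji

lemma monomial_mul_transvection {M : Matrix (Fin n) (Fin n) K} {w : Equiv.Perm (Fin n)}
    {c : Fin n → K} (hc : ∀ b, c b ≠ 0) (hM : ∀ i b, M i b = if i = w b then c b else 0)
    (a b : Fin n) (t : K) :
    M * Matrix.transvection a b t =
      Matrix.transvection (w a) (w b) (t * (c a / c b)) * M := by
  rw [Matrix.transvection, Matrix.transvection, mul_add, add_mul, mul_one, one_mul]
  congr 1
  ext i j
  rcases eq_or_ne j b with rfl | hj <;> rcases eq_or_ne i (w a) with rfl | hi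
  · have := hc j
    simp only [Matrix.mul_single_apply_same, Matrix.single_mul_apply_same, hM, if_true]
    field_simp
  · simp [hM, hi]
  · simp [hM, hj, hj.symm]
  · simp [hj, hi]

variable {E : Type*} [AddCommGroup E] [Module ℂ E] {Φ : GL (Fin n) K → E}
  {d : GL (Fin n) K} {w : Equiv.Perm (Fin n)} {c : Fin n → K}

/-- The two characters of a root subgroup that `d` conjugates into another one agree. -/
lemma ite_adjacent_eq_of_ne_zero (hψ : ψ.IsPrimitive) (hΦ : IsBiequivariant (unipChar ψ) Φ)
    (hc : ∀ b, c b ≠ 0) (hd : ∀ i b, d.val i b = if i = w b then c b else 0) (hd0 : Φ d ≠ 0)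
    {a b : Fin n} (hab : a < b) (hwab : w a < w b) :
    (if (b : ℕ) = a + 1 then 1 else 0) =
      if (w b : ℕ) = w a + 1 then c a / c b else (0 : K) := by
  classical
  refine eq_of_forall_addChar_mul_eq hψ fun t => ?_
  have hab' := (isUnip_transvection hab t).toGL_val
  have hwab' := (isUnip_transvection hwab (t * (c a / c b))).toGL_val
  let u : unipotent K n := ⟨toGL (.transvection a b t), by
    rw [mem_unipotent, hab']; exact isUnip_transvection hab t⟩
  let v : unipotent K n := ⟨toGL (.transvection (w a) (w b) (t * (c a / c b))), by
    rw [mem_unipotent, hwab']; exact isUnip_transvection hwab _⟩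
  have hcomm : d * u.1 = v.1 * d := Units.ext <| by
    simpa only [u, v, Units.val_mul, hab', hwab'] using monomial_mul_transvection hc hd a b t
  have hχ : unipChar ψ u = unipChar ψ v := Units.ext <| smul_left_injective ℂ hd0 <| by
    simp only [← (hΦ u d).2, ← (hΦ v d).1, hcomm]
  simp only [unipChar, MonoidHom.coe_mk, OneHom.coe_mk, u, v, hab', hwab',
    superdiag_transvection] at hχ
  simpa only [mul_ite, mul_one, mul_zero] using hχ

lemma antitranspose_eq_self_of_ne_zero (hψ : ψ.IsPrimitive) (hΦ : IsBiequivariant (unipChar ψ) Φ)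
    (hc : ∀ b, c b ≠ 0) (hd : ∀ i b, d.val i b = if i = w b then c b else 0) (hd0 : Φ d ≠ 0) :
    antitranspose d = d := by
  have hadj {a b : Fin n} (hab : a < b) (hwab : w a < w b) :=
    ite_adjacent_eq_of_ne_zero hψ hΦ hc hd hd0 hab hwab
  have hiff {a b : Fin n} (hab : a < b) (hwab : w a < w b) :
      (b : ℕ) = a + 1 ↔ (w b : ℕ) = w a + 1 := by
    have h := hadj hab hwab
    have hne : c a / c b ≠ 0 := div_ne_zero (hc a) (hc b)
    split_ifs at h <;> simp_all
  let σ : Equiv.Perm (Fin n) := w.trans Fin.revPerm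
  have hσ : IsLayered σ := fun a b hab hba => by
    rw [hiff hab (Fin.rev_lt_rev.1 hba)]
    simp only [σ, Equiv.trans_apply, Fin.revPerm_apply, Fin.val_rev]
    lia
  have hinv := hσ.apply_apply (c := c) fun a b hab hba => by
    have hlt : a < b := Fin.lt_def.2 (by lia)
    have h := hadj hlt (Fin.rev_lt_rev.1 hba)
    rw [if_pos hab, if_pos ((hiff hlt (Fin.rev_lt_rev.1 hba)).1 hab), eq_comm,
      div_eq_one_iff_eq (hc b)] at h
    exact h
  refine Matrix.GeneralLinearGroup.ext fun i j => ?_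
  have hinvol : Function.Involutive σ := fun s => (hinv s).1
  have hsupp : j.rev = w i.rev ↔ i = w j := by
    rw [← Fin.rev_inj, Fin.rev_rev, ← Fin.rev_inj (i := i), eq_comm]
    exact hinvol.eq_iff
  simp only [antitranspose_apply, hd, hsupp]
  split_ifs with h
  · rw [h, ← (hinv j).2]
    rfl
  · rfl

lemma IsBiequivariant.apply_antitranspose (hψ : ψ.IsPrimitive)
    (hΦ : IsBiequivariant (unipChar ψ) Φ) (g : GL (Fin n) K) : Φ (antitranspose g) = Φ g := by
  have hχ {u : GL (Fin n) K} (hu : u ∈ unipotent K n) :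
      unipChar ψ ⟨antitranspose u, IsUnip.antitranspose hu⟩ = unipChar ψ ⟨u, hu⟩ := by
    simp [unipChar, superdiag_antitranspose]
  have hΦ' : IsBiequivariant (unipChar ψ) fun x => Φ (antitranspose x) := fun u x => by
    simp only [antitranspose_mul, ← hχ u.2]
    exact (hΦ ⟨antitranspose u, IsUnip.antitranspose u.2⟩ _).symm
  obtain ⟨u, u', hu, hu', w, c, hc, hd⟩ := exists_isUnip_mul_mul_eq_monomial g
  have hmono : Φ (antitranspose (u * g * u')) = Φ (u * g * u') := by
    by_cases h : Φ (u * g * u') = 0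
    · by_contra h'
      refine h' ?_
      rw [antitranspose_eq_self_of_ne_zero hψ hΦ' hc hd (h ▸ h')]
    · rw [antitranspose_eq_self_of_ne_zero hψ hΦ hc hd h]
  have hl := hΦ ⟨u, hu⟩
  have hl' := hΦ' ⟨u, hu⟩
  have hr := hΦ ⟨u', hu'⟩
  have hr' := hΦ' ⟨u', hu'⟩
  simp only at hl hl' hr hr'
  rw [(hr' _).2, (hl' _).1, (hr _).2, (hl _).1] at hmono
  exact smul_right_injective E (Units.ne_zero _) (smul_right_injective E (Units.ne_zero _) hmono)

end Relevant

section BesselPair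

variable {n : ℕ}

lemma mem_unipFinset {u : GL (Fin n) F} : u ∈ UnipFinset F n ↔ IsUnip F u.val := by
  simp [UnipFinset]

noncomputable instance : Fintype (unipotent F n) :=
  Fintype.subtype (UnipFinset F n) fun _ => mem_unipFinset

lemma card_unipFinset : (UnipFinset F n).card = Fintype.card (unipotent F n) :=
  (Fintype.subtype_card (UnipFinset F n) fun _ => mem_unipFinset).symm

lemma sum_unipFinset {M : Type*} [AddCommMonoid M] (f : GL (Fin n) F → M) :
    ∑ u ∈ UnipFinset F n, f u = ∑ u : unipotent F n, f u :=
  Finset.sum_subtype _ (fun _ => mem_unipFinset) f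

variable {V : Type*} [AddCommGroup V] [Module ℂ V]

/-- A Whittaker functional `lam` together with a Whittaker vector `v₀`, normalized by `lam v₀ = 1`,
for a representation whose space of Whittaker vectors is a line. The Bessel function is then the
matrix coefficient of `lam` and `v₀`. -/
structure IsBesselPair (π : Representation ℂ (GL (Fin n) F) V) (ψ : AddChar F ℂˣ)
    (lam : V →ₗ[ℂ] ℂ) (v₀ : V) : Prop where
  isotypicProj_apply : ∀ v, isotypicProj π (unipChar ψ) v = lam v • v₀
  apply_self : lam v₀ = 1

variable {π : Representation ℂ (GL (Fin n) F) V} {ψ : AddChar F ℂˣ} {lam : V →ₗ[ℂ] ℂ} {v₀ : V}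

/-- The theorem of Gelfand and Graev: a Whittaker functional is unique up to scalars. -/
theorem exists_isBesselPair [FiniteDimensional ℂ V] (hψ : ψ.IsPrimitive) (hπ : IsIrreducible π)
    (hlam : IsWhittaker π (psiN ψ) lam) (hlam0 : lam ≠ 0) : ∃ v₀, IsBesselPair π ψ lam v₀ := by
  have hproj (v : V) : lam (isotypicProj π (unipChar ψ) v) = lam v :=
    apply_isotypicProj π _ (fun u v => hlam u u.2 v) v
  obtain ⟨v, hv⟩ : ∃ v, lam v ≠ 0 := by
    simpa [LinearMap.ext_iff] using hlam0
  let v₁ := isotypicProj π (unipChar ψ) v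
  have hv₁ : lam v₁ ≠ 0 := by rwa [hproj]
  have hv₁0 : v₁ ≠ 0 := fun h => hv₁ (by rw [h, map_zero])
  have hev₁ : isotypicProj π (unipChar ψ) v₁ = v₁ := isotypicProj_apply_isotypicProj π _ v
  have hcomm : ∀ g h, Commute (compression π (unipChar ψ) g) (compression π (unipChar ψ) h) :=
    commute_compression π antitranspose_involutive antitranspose_mul
      (fun _ => IsUnip.antitranspose) (fun u => by simp [unipChar, superdiag_antitranspose])
      fun _ hΦ => hΦ.apply_antitranspose hψ
  have hline (x : V) : ∃ a : ℂ, a • v₁ = isotypicProj π (unipChar ψ) x := by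
    refine Submodule.mem_span_singleton.1
      (isotypicProj_mem_of_compression_mem hπ hv₁0 hev₁ (fun g => ?_) x)
    obtain ⟨a, ha⟩ := exists_compression_apply_eq_smul hπ hcomm hv₁0 hev₁ g
    exact Submodule.mem_span_singleton.2 ⟨a, ha.symm⟩
  refine ⟨(lam v₁)⁻¹ • v₁, fun x => ?_, by simp [hv₁]⟩
  obtain ⟨a, ha⟩ := hline x
  rw [← hproj x, ← ha, map_smul, smul_eq_mul, smul_smul, mul_inv_cancel_right₀ hv₁]

lemma IsBesselPair.isWhittaker (h : IsBesselPair π ψ lam v₀) : IsWhittaker π (psiN ψ) lam := by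
  intro u hu v
  have huv := LinearMap.congr_fun (isotypicProj_mul_map π (unipChar ψ) ⟨u, hu⟩) v
  simp only [Module.End.mul_apply, LinearMap.smul_apply, h.isotypicProj_apply,
    coe_unipChar] at huv
  simpa [h.apply_self] using congrArg lam huv

lemma IsBesselPair.map_apply (h : IsBesselPair π ψ lam v₀) {u : GL (Fin n) F}
    (hu : IsUnip F u.val) : π u v₀ = psiN ψ u • v₀ := by
  have huv := LinearMap.congr_fun (map_mul_isotypicProj π (unipChar ψ) ⟨u, hu⟩) v₀
  simpa only [Module.End.mul_apply, LinearMap.smul_apply, h.isotypicProj_apply, h.apply_self,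
    one_smul, coe_unipChar] using huv

lemma IsBesselPair.apply_eq (h : IsBesselPair π ψ lam v₀) {nu : V →ₗ[ℂ] ℂ}
    (hnu : IsWhittaker π (psiN ψ) nu) (v : V) : nu v = nu v₀ * lam v := by
  rw [← apply_isotypicProj π (unipChar ψ) (fun u v => hnu u u.2 v) v, h.isotypicProj_apply,
    map_smul, smul_eq_mul, mul_comm]

lemma IsBesselPair.bessel_eq [FiniteDimensional ℂ V] (h : IsBesselPair π ψ lam v₀)
    (g : GL (Fin n) F) : Bessel π (psiN ψ) g = lam (π g v₀) := by
  have hrank : π g * isotypicProj π (unipChar ψ) = lam.smulRight (π g v₀) :=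
    LinearMap.ext fun v => by simp [h.isotypicProj_apply]
  calc Bessel π (psiN ψ) g
      = LinearMap.trace ℂ V (π g * isotypicProj π (unipChar ψ)) := by
        rw [Bessel, card_unipFinset, sum_unipFinset, isotypicProj, mul_smul_comm, map_smul,
          smul_eq_mul, Finset.mul_sum (a := π g), map_sum]
        refine congrArg _ (Finset.sum_congr rfl fun u _ => ?_)
        rw [mul_smul_comm, map_smul, map_mul, smul_eq_mul, mul_comm]
        rfl
    _ = lam (π g v₀) := by rw [hrank, LinearMap.trace_smulRight]

end BesselPair

section Columns

variable {K : Type*} [Field K] {n : ℕ}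

/-- The part of the vector `y` strictly above position `j`. -/
def truncate (j : Fin n) (y : Fin n → K) : Fin n → K := fun i => if i < j then y i else 0

lemma truncate_of_lt {i j : Fin n} (hij : i < j) (y : Fin n → K) : truncate j y i = y i :=
  if_pos hij

lemma truncate_of_le {i j : Fin n} (hji : j ≤ i) (y : Fin n → K) : truncate j y i = 0 :=
  if_neg hji.not_gt

lemma truncate_add (j : Fin n) (y z : Fin n → K) :
    truncate j (y + z) = truncate j y + truncate j z := by
  ext i
  simp only [truncate, Pi.add_apply]
  split_ifs <;> simp

lemma truncate_eq_self {j : Fin n} {y : Fin n → K} (hy : ∀ i, j ≤ i → y i = 0) :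
    truncate j y = y := by
  ext i
  rcases lt_or_ge i j with h | h
  · exact truncate_of_lt h y
  · rw [truncate_of_le h, hy i h]

lemma dotProduct_truncate (j : Fin n) (a y : Fin n → K) :
    a ⬝ᵥ truncate j y = truncate j a ⬝ᵥ y := by
  simp only [dotProduct, truncate, mul_ite, ite_mul, mul_zero, zero_mul]

/-- The unipotent element whose only nonzero entries off the diagonal are those of `y` in column
`j` above the diagonal. -/
def colElt (j : Fin n) (y : Fin n → K) : GL (Fin n) K where
  val := 1 + vecMulVec (truncate j y) (Pi.single j 1)
  inv := 1 - vecMulVec (truncate j y) (Pi.single j 1)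
  val_inv := by
    simp [add_mul, mul_sub, vecMulVec_mul_vecMulVec, truncate_of_le]
  inv_val := by
    simp [sub_mul, mul_add, vecMulVec_mul_vecMulVec, truncate_of_le]

lemma colElt_val (j : Fin n) (y : Fin n → K) :
    (colElt j y).val = 1 + vecMulVec (truncate j y) (Pi.single j 1) :=
  rfl

lemma colElt_apply (j : Fin n) (y : Fin n → K) (i k : Fin n) :
    (colElt j y).val i k = (1 : Matrix _ _ K) i k + if k = j then truncate j y i else 0 := by
  simp [colElt_val, vecMulVec_apply, Pi.single_apply]

lemma colElt_truncate (j : Fin n) (y : Fin n → K) : colElt j (truncate j y) = colElt j y :=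
  Units.ext (by rw [colElt_val, colElt_val, truncate_eq_self fun i => (truncate_of_le · y)])

lemma colElt_zero (j : Fin n) : (colElt j 0 : GL (Fin n) K) = 1 :=
  Matrix.GeneralLinearGroup.ext fun i k => by simp [colElt_apply, truncate]

lemma colElt_add (j : Fin n) (y z : Fin n → K) : colElt j (y + z) = colElt j y * colElt j z := by
  refine Units.ext ?_
  simp only [Units.val_mul, colElt_val, truncate_add, add_vecMulVec, mul_add, add_mul, mul_one,
    one_mul, vecMulVec_mul_vecMulVec, single_one_dotProduct, truncate_of_le le_rfl, zero_smul,
    vecMulVec_zero, add_zero, add_assoc]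

lemma colElt_inv (j : Fin n) (y : Fin n → K) : (colElt j y)⁻¹ = colElt j (-y) :=
  inv_eq_of_mul_eq_one_right (by rw [← colElt_add, add_neg_cancel, colElt_zero])

lemma isUnip_colElt (j : Fin n) (y : Fin n → K) : IsUnip K (colElt j y).val := by
  refine isUnip_one_add fun i k hki => ?_
  rcases eq_or_ne k j with rfl | hk
  · simp [vecMulVec_apply, truncate_of_le hki]
  · simp [vecMulVec_apply, hk]

lemma superdiag_colElt {i j : Fin n} (hij : (j : ℕ) = i + 1) (y : Fin n → K) :
    superdiag K (colElt j y).val = y i := by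
  rw [colElt_val, superdiag_one_add, superdiag_eq_apply hij fun a b _ hb => by
    simp [vecMulVec_apply, hb]]
  simp [vecMulVec_apply, truncate_of_lt (Fin.lt_def.2 (by lia) : i < j)]

variable (K n) in
/-- The subgroup of matrices whose rows of index at least `j` are those of the identity matrix. For
`j = n - 1` it is the mirabolic subgroup. -/
def mirabolic (j : ℕ) : Subgroup (GL (Fin n) K) where
  carrier := {g | ∀ i : Fin n, j ≤ i → g.val i = (1 : Matrix _ _ K) i}
  one_mem' _ _ := rfl
  mul_mem' {g h} hg hh i hi := by
    rw [Units.val_mul, mul_apply_eq_vecMul, hg i hi, ← mul_apply_eq_vecMul, one_mul, hh i hi]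
  inv_mem' {g} hg i hi := by
    rw [← one_mul g⁻¹.val, mul_apply_eq_vecMul, ← hg i hi, ← mul_apply_eq_vecMul, Units.mul_inv,
      hg i hi]

lemma mirabolic_mono {i j : ℕ} (hij : i ≤ j) : mirabolic K n i ≤ mirabolic K n j :=
  fun _ hg a ha => hg a (hij.trans ha)

lemma mulVec_apply_of_mem_mirabolic {j : ℕ} {g : GL (Fin n) K} (hg : g ∈ mirabolic K n j)
    {i : Fin n} (hi : j ≤ i) (y : Fin n → K) : (g.val *ᵥ y) i = y i := by
  rw [mulVec, hg i hi, ← mulVec, one_mulVec]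

lemma colElt_mem_mirabolic (j : Fin n) (y : Fin n → K) : colElt j y ∈ mirabolic K n j := by
  refine fun i hi => funext fun k => ?_
  rw [colElt_apply, truncate_of_le (Fin.le_def.2 hi), ite_self, add_zero]

lemma mul_colElt_of_mem_mirabolic {j : Fin n} {g : GL (Fin n) K} (hg : g ∈ mirabolic K n j)
    (y : Fin n → K) : g * colElt j y = colElt j (g.val *ᵥ truncate j y) * g := by
  have htrunc : truncate j (g.val *ᵥ truncate j y) = g.val *ᵥ truncate j y :=
    truncate_eq_self fun i hi => by
      rw [mulVec_apply_of_mem_mirabolic hg hi, truncate_of_le hi]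
  have hrow : Pi.single j 1 ᵥ* g.val = Pi.single j 1 := by
    rw [single_one_vecMul]
    exact funext fun k => by rw [row_apply, hg j le_rfl, one_eq_pi_single]
  refine Units.ext ?_
  rw [Units.val_mul, Units.val_mul, colElt_val, colElt_val, htrunc, mul_add, add_mul, mul_one,
    one_mul, mul_vecMulVec, vecMulVec_mul, hrow]

lemma exists_mem_mirabolic_row_eq {i j : Fin n} (hij : i < j) {b : Fin n → K} (hb : b ≠ 0)
    (hbj : ∀ k, j ≤ k → b k = 0) : ∃ g ∈ mirabolic K n j, g.val i = b := by
  obtain ⟨r, hr⟩ := Function.ne_iff.1 hb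
  have hrj : r < j := not_le.1 fun h => hr (hbj r h)
  have hdet : (updateRow (1 : Matrix (Fin n) (Fin n) K) r b).det = b r := by
    simp [← cramer_transpose_apply]
  let M := (updateRow (1 : Matrix (Fin n) (Fin n) K) r b).submatrix (Equiv.swap r i) id
  have hM : IsUnit M := by
    rw [Matrix.isUnit_iff_isUnit_det, det_permute, hdet]
    exact IsUnit.mul ((Equiv.Perm.sign (Equiv.swap r i)).isUnit.map (Int.castRingHom K)) hr.isUnit
  refine ⟨hM.unit, fun k hk => ?_, ?_⟩
  · have hkr : k ≠ r := (hrj.trans_le (Fin.le_def.2 hk)).ne'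
    have hki : k ≠ i := (hij.trans_le (Fin.le_def.2 hk)).ne'
    ext c
    simp [M, Equiv.swap_apply_of_ne_of_ne hkr hki, hkr]
  · ext c
    simp [M]

/-- The subgroup `U^{(j)}` of `U_n` consisting of the elements whose first `j` columns are those of
the identity matrix. -/
def IsUnipFrom (j : ℕ) (u : GL (Fin n) K) : Prop :=
  IsUnip K u.val ∧ ∀ i c : Fin n, (c : ℕ) < j → u.val i c = (1 : Matrix _ _ K) i c

lemma IsUnipFrom.eq_one {j : ℕ} {u : GL (Fin n) K} (hu : IsUnipFrom j u) (hj : n ≤ j) : u = 1 :=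
  Matrix.GeneralLinearGroup.ext fun i c => hu.2 i c (c.2.trans_le hj)

lemma isUnipFrom_one {u : GL (Fin n) K} (hu : IsUnip K u.val) : IsUnipFrom 1 u := by
  refine ⟨hu, fun i c hc => ?_⟩
  rcases eq_or_ne i c with rfl | h
  · rw [hu.1, one_apply_eq]
  · have : (i : ℕ) ≠ c := fun h' => h (Fin.ext h')
    rw [hu.2 i c (by lia), one_apply_ne h]

lemma IsUnipFrom.exists_eq_mul_colElt {j : Fin n} {u : GL (Fin n) K} (hu : IsUnipFrom j u) :
    ∃ u', IsUnipFrom (j + 1) u' ∧ u = u' * colElt j fun i => u.val i j := by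
  let y : Fin n → K := fun i => u.val i j
  have hfix : u.val *ᵥ truncate j (-y) = truncate j (-y) := by
    conv_rhs => rw [← one_mulVec (truncate j (-y))]
    ext i
    rw [mulVec, mulVec, dotProduct, dotProduct]
    refine Finset.sum_congr rfl fun c _ => ?_
    rcases lt_or_ge c j with hc | hc
    · rw [hu.2 i c hc]
    · rw [truncate_of_le hc, mul_zero, mul_zero]
  have hval (i c : Fin n) : (u * colElt j (-y)).val i c =
      u.val i c + if c = j then truncate j (-y) i else 0 := by
    rw [Units.val_mul, colElt_val, mul_add, mul_one, mul_vecMulVec, hfix]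
    simp [vecMulVec_apply, Pi.single_apply]
  refine ⟨u * colElt j (-y), ⟨hu.1.mul (isUnip_colElt j _), fun i c hc => ?_⟩, ?_⟩
  · rw [hval]
    rcases eq_or_ne c j with rfl | hcj
    · rcases lt_trichotomy i c with hi | rfl | hi
      · simp [truncate_of_lt hi, y, hi.ne]
      · simp [truncate_of_le, hu.1.1]
      · simp [truncate_of_le hi.le, hi.ne', hu.1.2 i c hi]
    · rw [if_neg hcj, add_zero, hu.2 i c (by lia)]
  · rw [mul_assoc, ← colElt_add, neg_add_cancel, colElt_zero, mul_one]

/-- Right multiplication by `g⁻¹` does not change the nonzero columns of `u - 1`, and left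
multiplication by `g` changes only entries above its superdiagonal. -/
lemma mul_val_eq_self_of_mem_mirabolic {j : ℕ} {g : GL (Fin n) K} (hg : g ∈ mirabolic K n j)
    {N : Matrix (Fin n) (Fin n) K} (hN : ∀ i c : Fin n, (c : ℕ) < j → N i c = 0) :
    N * g.val = N := by
  conv_rhs => rw [← mul_one N]
  ext i k
  rw [mul_apply, mul_apply]
  refine Finset.sum_congr rfl fun c _ => ?_
  rcases lt_or_ge (c : ℕ) j with hc | hc
  · rw [hN i c hc, zero_mul, zero_mul]
  · rw [hg c hc]

lemma IsUnipFrom.exists_mul_eq_mul {j : ℕ} {u g : GL (Fin n) K} (hu : IsUnipFrom (j + 1) u)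
    (hg : g ∈ mirabolic K n j) :
    ∃ u', IsUnipFrom (j + 1) u' ∧ superdiag K u'.val = superdiag K u.val ∧ g * u = u' * g := by
  obtain ⟨N, hN⟩ : ∃ N, u.val = 1 + N := ⟨u.val - 1, by rw [add_sub_cancel]⟩
  have hcol (i c : Fin n) (hc : (c : ℕ) ≤ j) : N i c = 0 := by
    simpa [hN] using hu.2 i c (by lia)
  have hlower (i c : Fin n) (hci : c ≤ i) : N i c = 0 := by
    rcases hci.eq_or_lt with rfl | hci
    · simpa [hN] using hu.1.1 c
    · simpa [hN, hci.ne'] using hu.1.2 i c hci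
  have hNg : N * g⁻¹.val = N :=
    mul_val_eq_self_of_mem_mirabolic (inv_mem hg) fun i c hc => hcol i c hc.le
  have hgN (i c : Fin n) (hi : j ≤ i) : (g.val * N) i c = N i c := by
    rw [mul_apply_eq_vecMul, hg i hi, ← mul_apply_eq_vecMul, one_mul]
  have hgN_col (i c : Fin n) (hc : (c : ℕ) ≤ j) : (g.val * N) i c = 0 := by
    rw [mul_apply]
    exact Finset.sum_eq_zero fun k _ => by rw [hcol k c hc, mul_zero]
  have hval : (g * u * g⁻¹).val = 1 + g.val * N := by
    rw [Units.val_mul, Units.val_mul, hN, mul_add, add_mul, mul_one, mul_assoc, hNg, Units.mul_inv]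
  refine ⟨g * u * g⁻¹, ⟨?_, fun i c hc => ?_⟩, ?_, by rw [inv_mul_cancel_right]⟩
  · rw [hval]
    refine isUnip_one_add fun i c hci => ?_
    rcases le_or_gt j (i : ℕ) with hi | hi
    · rw [hgN i c hi, hlower i c hci]
    · exact hgN_col i c (by lia)
  · rw [hval, Matrix.add_apply, hgN_col i c (by lia), add_zero]
  · rw [hval, hN, superdiag_one_add, superdiag_one_add]
    simp only [superdiag]
    refine Finset.sum_congr rfl fun i _ => Finset.sum_congr rfl fun c _ => ?_
    split_ifs with hc
    · rcases le_or_gt j (i : ℕ) with hi | hi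
      · exact hgN i c hi
      · rw [hgN_col i c (by lia), hcol i c (by lia)]
    · rfl

end Columns

section Blocks

variable {R : Type*} {n a b c d e f : ℕ}

/-- The `n × n` matrix with blocks `[A B; C D]`, where the rows are divided as `a + b = n` and the
columns as `c + d = n`. -/
def blocks (hr : a + b = n) (hc : c + d = n) (A : Matrix (Fin a) (Fin c) R)
    (B : Matrix (Fin a) (Fin d) R) (C : Matrix (Fin b) (Fin c) R) (D : Matrix (Fin b) (Fin d) R) :
    Matrix (Fin n) (Fin n) R :=
  reindex (finSumFinEquiv.trans (finCongr hr)) (finSumFinEquiv.trans (finCongr hc))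
    (fromBlocks A B C D)

lemma exists_eq_blocks (hr : a + b = n) (hc : c + d = n) (M : Matrix (Fin n) (Fin n) R) :
    ∃ A B C D, M = blocks hr hc A B C D := by
  let e : Matrix (Fin a ⊕ Fin b) (Fin c ⊕ Fin d) R ≃ Matrix (Fin n) (Fin n) R :=
    reindex (finSumFinEquiv.trans (finCongr hr)) (finSumFinEquiv.trans (finCongr hc))
  refine ⟨(e.symm M).toBlocks₁₁, (e.symm M).toBlocks₁₂, (e.symm M).toBlocks₂₁,
    (e.symm M).toBlocks₂₂, ?_⟩
  rw [blocks, fromBlocks_toBlocks]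
  exact (e.apply_symm_apply M).symm

lemma blocks_apply (hr : a + b = n) (hc : c + d = n) (A : Matrix (Fin a) (Fin c) R)
    (B : Matrix (Fin a) (Fin d) R) (C : Matrix (Fin b) (Fin c) R) (D : Matrix (Fin b) (Fin d) R)
    (i j : Fin n) : blocks hr hc A B C D i j =
      if hi : (i : ℕ) < a then if hj : (j : ℕ) < c then A ⟨i, hi⟩ ⟨j, hj⟩
        else B ⟨i, hi⟩ ⟨j - c, by lia⟩
      else if hj : (j : ℕ) < c then C ⟨i - a, by lia⟩ ⟨j, hj⟩
        else D ⟨i - a, by lia⟩ ⟨j - c, by lia⟩ := by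
  subst hr
  obtain ⟨j, rfl⟩ := (finCongr hc).surjective j
  induction i using Fin.addCases <;> induction j using Fin.addCases <;> simp [blocks]

variable [CommRing R]

lemma blocks_mul (h₁ : a + b = n) (h₂ : c + d = n) (h₃ : e + f = n)
    (A : Matrix (Fin a) (Fin c) R) (B : Matrix (Fin a) (Fin d) R) (C : Matrix (Fin b) (Fin c) R)
    (D : Matrix (Fin b) (Fin d) R) (A' : Matrix (Fin c) (Fin e) R) (B' : Matrix (Fin c) (Fin f) R)
    (C' : Matrix (Fin d) (Fin e) R) (D' : Matrix (Fin d) (Fin f) R) :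
    blocks h₁ h₂ A B C D * blocks h₂ h₃ A' B' C' D' =
      blocks h₁ h₃ (A * A' + B * C') (A * B' + B * D') (C * A' + D * C') (C * B' + D * D') := by
  simp only [blocks, reindex_apply, submatrix_mul_equiv, fromBlocks_multiply]

lemma blocks_one (h : a + b = n) : blocks h h (1 : Matrix _ _ R) 0 0 1 = 1 := by
  rw [blocks, fromBlocks_one, reindex_apply, submatrix_one_equiv]

/-- The block matrix `[1 Y; 0 1]`. -/
def blockUpper (h : a + b = n) (Y : Matrix (Fin a) (Fin b) R) : GL (Fin n) R where
  val := blocks h h 1 Y 0 1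
  inv := blocks h h 1 (-Y) 0 1
  val_inv := by simp [blocks_mul, blocks_one]
  inv_val := by simp [blocks_mul, blocks_one]

lemma blockUpper_val (h : a + b = n) (Y : Matrix (Fin a) (Fin b) R) :
    (blockUpper h Y).val = blocks h h 1 Y 0 1 :=
  rfl

/-- The block matrix `[1 0; X 1]`. -/
def blockLower (h : a + b = n) (X : Matrix (Fin b) (Fin a) R) : GL (Fin n) R where
  val := blocks h h 1 0 X 1
  inv := blocks h h 1 0 (-X) 1
  val_inv := by simp [blocks_mul, blocks_one]
  inv_val := by simp [blocks_mul, blocks_one]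

lemma blockLower_val (h : a + b = n) (X : Matrix (Fin b) (Fin a) R) :
    (blockLower h X).val = blocks h h 1 0 X 1 :=
  rfl

/-- The block matrix `[g 0; 0 1]`. -/
def blockEmbed (h : a + b = n) : GL (Fin a) R →* GL (Fin n) R where
  toFun g :=
    { val := blocks h h g.val 0 0 1
      inv := blocks h h g⁻¹.val 0 0 1
      val_inv := by simp [blocks_mul, blocks_one]
      inv_val := by simp [blocks_mul, blocks_one] }
  map_one' := Units.ext (blocks_one h)
  map_mul' g g' := Units.ext (by simp [blocks_mul])

lemma blockEmbed_val (h : a + b = n) (g : GL (Fin a) R) :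
    (blockEmbed h g).val = blocks h h g.val 0 0 1 :=
  rfl

/-- The permutation matrix `[0 1; 1 0]` whose lower left block has size `a`. -/
def blockSwap (h : a + b = n) : GL (Fin n) R where
  val := blocks (by lia : b + a = n) h 0 1 1 0
  inv := blocks h (by lia : b + a = n) 0 1 1 0
  val_inv := by simp [blocks_mul, blocks_one]
  inv_val := by simp [blocks_mul, blocks_one]

lemma blockSwap_val (h : a + b = n) :
    (blockSwap h : GL (Fin n) R).val = blocks (by lia : b + a = n) h 0 1 1 0 :=
  rfl

lemma blockSwap_conj_val (h : a + b = n) {g : GL (Fin n) R} {A : Matrix (Fin a) (Fin a) R}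
    {B : Matrix (Fin a) (Fin b) R} {C : Matrix (Fin b) (Fin a) R} {D : Matrix (Fin b) (Fin b) R}
    (hg : g.val = blocks h h A B C D) :
    (blockSwap h * g * (blockSwap h)⁻¹).val =
      blocks (by lia : b + a = n) (by lia : b + a = n) D C B A := by
  have hinv : ((blockSwap h : GL (Fin n) R)⁻¹).val = blocks h (by lia : b + a = n) 0 1 1 0 := rfl
  rw [Units.val_mul, Units.val_mul, blockSwap_val, hg, hinv, blocks_mul, blocks_mul]
  simp

variable {K : Type*} [Field K]

lemma isUnip_blocks_iff (h : a + b = n) {A : Matrix (Fin a) (Fin a) K}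
    {B : Matrix (Fin a) (Fin b) K} {C : Matrix (Fin b) (Fin a) K} {D : Matrix (Fin b) (Fin b) K} :
    IsUnip K (blocks h h A B C D) ↔ IsUnip K A ∧ C = 0 ∧ IsUnip K D := by
  subst h
  simp only [IsUnip, Fin.forall_fin_add]
  simp only [blocks, finCongr_refl, Equiv.trans_refl, reindex_apply, submatrix_apply,
    finSumFinEquiv_symm_apply_castAdd, fromBlocks_apply₁₁, finSumFinEquiv_symm_apply_natAdd,
    fromBlocks_apply₂₂, Fin.val_castAdd, Fin.val_fin_lt, Fin.val_natAdd, fromBlocks_apply₁₂,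
    fromBlocks_apply₂₁, add_lt_add_iff_left, ← Matrix.ext_iff, Matrix.zero_apply]
  constructor
  · rintro ⟨⟨hA, hD⟩, hA', hD'⟩
    exact ⟨⟨hA, fun i j => (hA' i).1 j⟩, fun i j => (hD' i).1 j (by lia), hD, fun i => (hD' i).2⟩
  · rintro ⟨⟨hA, hA'⟩, hC, hD, hD'⟩
    exact ⟨⟨hA, hD⟩, fun i => ⟨hA' i, fun j hj => by lia⟩, fun i => ⟨fun j _ => hC i j, hD' i⟩⟩

lemma superdiag_blocks (h : a + b = n) {A : Matrix (Fin a) (Fin a) K}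
    {B : Matrix (Fin a) (Fin b) K} {C : Matrix (Fin b) (Fin a) K} {D : Matrix (Fin b) (Fin b) K}
    (hB : ∀ (i : Fin a) (j : Fin b), (i : ℕ) + 1 = a → (j : ℕ) = 0 → B i j = 0) :
    superdiag K (blocks h h A B C D) = superdiag K A + superdiag K D := by
  subst h
  simp only [superdiag, Fin.sum_univ_add]
  simp only [Fin.val_castAdd, blocks, finCongr_refl, Equiv.trans_refl, reindex_apply,
    submatrix_apply, finSumFinEquiv_symm_apply_castAdd, fromBlocks_apply₁₁, Fin.val_natAdd,
    finSumFinEquiv_symm_apply_natAdd, fromBlocks_apply₁₂, fromBlocks_apply₂₁, fromBlocks_apply₂₂]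
  have hB' (i : Fin a) (j : Fin b) : (if a + (j : ℕ) = i + 1 then B i j else 0) = 0 := by
    split_ifs with hij
    · exact hB i j (by lia) (by lia)
    · rfl
  have hC (i : Fin b) (j : Fin a) : (j : ℕ) ≠ a + (i + 1) := by lia
  simp [hB', hC, add_assoc]

lemma mem_mirabolic_of_val_eq_blocks (h : a + b = n) {g : GL (Fin n) K}
    {A : Matrix (Fin a) (Fin a) K} {B : Matrix (Fin a) (Fin b) K} {C : Matrix (Fin b) (Fin a) K}
    {D : Matrix (Fin b) (Fin b) K} (hg : g.val = blocks h h A B C D) {i : ℕ}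
    (hC : ∀ s : Fin b, i ≤ s → C s = 0)
    (hD : ∀ s : Fin b, i ≤ s → D s = (1 : Matrix (Fin b) (Fin b) K) s) :
    g ∈ mirabolic K n (a + i) := by
  intro r hr
  ext c
  have hra : ¬(r : ℕ) < a := by lia
  rw [hg, ← blocks_one h, blocks_apply, blocks_apply, dif_neg hra, dif_neg hra,
    hC ⟨r - a, by lia⟩ (Nat.le_sub_of_add_le' hr), hD ⟨r - a, by lia⟩ (Nat.le_sub_of_add_le' hr)]
  rfl

lemma isUnipFrom_of_val_eq_blocks (h : a + b = n) {g : GL (Fin n) K}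
    {B : Matrix (Fin a) (Fin b) K} {D : Matrix (Fin b) (Fin b) K}
    (hg : g.val = blocks h h 1 B 0 D) (hD : IsUnip K D) : IsUnipFrom a g := by
  refine ⟨hg ▸ (isUnip_blocks_iff h).2 ⟨IsUnip.one, rfl, hD⟩, fun r c hc => ?_⟩
  rw [hg, ← blocks_one h, blocks_apply, blocks_apply]
  simp only [dif_pos hc]

end Blocks

section WhittakerFrom

variable {K : Type*} [Field K] {n : ℕ} {V : Type*} [AddCommGroup V] [Module ℂ V]
  {π : Representation ℂ (GL (Fin n) K) V} {ψ : AddChar K ℂˣ}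

/-- The functionals that transform by `ψ_n` under the subgroup `U^{(j)}` of `U_n`. They are the
Whittaker functionals for `j ≤ 1`, and all functionals for `j ≥ n`. -/
def whittakerFrom (π : Representation ℂ (GL (Fin n) K) V) (ψ : AddChar K ℂˣ) (j : ℕ) :
    Submodule ℂ (V →ₗ[ℂ] ℂ) where
  carrier := {l | ∀ u, IsUnipFrom j u → ∀ v, l (π u v) = psiN ψ u * l v}
  zero_mem' _ _ _ := (mul_zero _).symm
  add_mem' hl hl' u hu v := by
    simp only [LinearMap.add_apply, hl u hu, hl' u hu, mul_add]
  smul_mem' c l hl u hu v := by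
    simp only [LinearMap.smul_apply, hl u hu, smul_eq_mul, mul_left_comm]

lemma mem_whittakerFrom_of_le {j : ℕ} (hj : n ≤ j) (l : V →ₗ[ℂ] ℂ) :
    l ∈ whittakerFrom π ψ j := fun u hu v => by
  rw [hu.eq_one hj]
  simp [psiN, superdiag_one]

lemma isWhittaker_of_mem_whittakerFrom_one {l : V →ₗ[ℂ] ℂ} (hl : l ∈ whittakerFrom π ψ 1) :
    IsWhittaker π (psiN ψ) l :=
  fun u hu v => hl u (isUnipFrom_one hu) v

lemma comp_mem_whittakerFrom {j : ℕ} {l : V →ₗ[ℂ] ℂ} (hl : l ∈ whittakerFrom π ψ (j + 1))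
    {g : GL (Fin n) K} (hg : g ∈ mirabolic K n j) : l ∘ₗ π g ∈ whittakerFrom π ψ (j + 1) := by
  intro u hu v
  obtain ⟨u', hu', hsuper, hgu⟩ := hu.exists_mul_eq_mul hg
  rw [LinearMap.comp_apply, LinearMap.comp_apply, ← Module.End.mul_apply, ← map_mul, hgu, map_mul,
    Module.End.mul_apply, hl u' hu', psiN_congr ψ hsuper]

lemma mem_whittakerFrom_of_colElt {j : Fin n} {l : V →ₗ[ℂ] ℂ}
    (hl : l ∈ whittakerFrom π ψ (j + 1))
    (hcol : ∀ y v, l (π (colElt j y) v) = psiN ψ (colElt j y) * l v) :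
    l ∈ whittakerFrom π ψ j := by
  intro u hu v
  obtain ⟨u', hu', huu'⟩ := hu.exists_eq_mul_colElt
  rw [huu', map_mul, Module.End.mul_apply, hl u' hu', hcol, ← mul_assoc,
    psiN_mul ψ hu'.1 (isUnip_colElt j _)]

variable [Fintype K]

/-- The component of the functional `l` of frequency `a` in its Fourier expansion along the
abelian group of the elements `colElt j y`. -/
noncomputable def columnFourier (π : Representation ℂ (GL (Fin n) K) V) (ψ : AddChar K ℂˣ)
    (j : Fin n) (a : Fin n → K) (l : V →ₗ[ℂ] ℂ) : V →ₗ[ℂ] ℂ :=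
  ∑ y : Fin n → K, (ψ (-(a ⬝ᵥ y)) : ℂ) • l ∘ₗ π (colElt j y)

lemma columnFourier_apply (j : Fin n) (a : Fin n → K) (l : V →ₗ[ℂ] ℂ) (v : V) :
    columnFourier π ψ j a l v = ∑ y, (ψ (-(a ⬝ᵥ y)) : ℂ) * l (π (colElt j y) v) := by
  simp [columnFourier]

lemma columnFourier_mem_whittakerFrom {j : Fin n} {l : V →ₗ[ℂ] ℂ}
    (hl : l ∈ whittakerFrom π ψ (j + 1)) (a : Fin n → K) :
    columnFourier π ψ j a l ∈ whittakerFrom π ψ (j + 1) :=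
  Submodule.sum_mem _ fun y _ =>
    Submodule.smul_mem _ _ (comp_mem_whittakerFrom hl (colElt_mem_mirabolic j y))

lemma sum_columnFourier (hψ : ψ.IsPrimitive) (j : Fin n) (l : V →ₗ[ℂ] ℂ) :
    ∑ a, columnFourier π ψ j a l = (Fintype.card K : ℂ) ^ n • l := by
  classical
  have hsum (y : Fin n → K) : ∑ a : Fin n → K, (ψ (-(a ⬝ᵥ y)) : ℂ) =
      if y = 0 then (Fintype.card K : ℂ) ^ n else 0 := by
    have := sum_addChar_dotProduct (ι := Fin n) (ψ := (Units.coeHom ℂ).compAddChar ψ)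
      (hψ.compMulHom_of_isPrimitive Units.val_injective) (-y)
    simpa using this
  simp only [columnFourier]
  rw [Finset.sum_comm]
  simp only [← Finset.sum_smul, hsum, ite_smul, zero_smul, Finset.sum_ite_eq', Finset.mem_univ,
    if_true, colElt_zero, map_one]
  rfl

lemma columnFourier_map_colElt (j : Fin n) (a z : Fin n → K) (l : V →ₗ[ℂ] ℂ) (v : V) :
    columnFourier π ψ j a l (π (colElt j z) v) =
      ψ (truncate j a ⬝ᵥ z) * columnFourier π ψ j a l v := by
  rw [← dotProduct_truncate, ← colElt_truncate]
  simp only [columnFourier_apply, Finset.mul_sum]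
  refine Fintype.sum_equiv (Equiv.addRight (truncate j z)) _ _ fun y => ?_
  rw [Equiv.coe_addRight, colElt_add, map_mul, Module.End.mul_apply, ← mul_assoc, ← Units.val_mul,
    ← AddChar.map_add_eq_mul, dotProduct_add, neg_add_rev, add_neg_cancel_left]

/-- For `truncate j a = 0` the functional is invariant under column `j`, whereas `ψ_n` is nontrivial
there; on the block unipotent radical of `GL_j × GL_{n-j}` the two effects of column `j` cancel. -/
lemma columnFourier_map_of_isUnipFrom {j : Fin n} (hj : (j : ℕ) ≠ 0) {a : Fin n → K}
    (ha : truncate j a = 0) {l : V →ₗ[ℂ] ℂ} (hl : l ∈ whittakerFrom π ψ (j + 1))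
    {u : GL (Fin n) K} (hu : IsUnipFrom j u) (hu' : u ∈ mirabolic K n j) (v : V) :
    columnFourier π ψ j a l (π u v) = columnFourier π ψ j a l v := by
  obtain ⟨i, hij⟩ : ∃ i : Fin n, (j : ℕ) = i + 1 := ⟨⟨j - 1, by lia⟩, by simp; lia⟩
  obtain ⟨u₁, hu₁, huu₁⟩ := hu.exists_eq_mul_colElt
  have hsuper : superdiag K u.val = u.val i j := superdiag_eq_apply hij fun b c hbc hcj => by
    have hne : b ≠ c := fun h => by simp [h] at hbc
    rcases lt_or_gt_of_ne hcj with hc | hc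
    · rw [hu.2 b c hc, one_apply_ne hne]
    · rw [hu' b (by lia), one_apply_ne hne]
  have hpsi : psiN ψ u₁ = 1 := by
    have hmul := congrArg (fun x => superdiag K x.val) huu₁
    simp only [Units.val_mul, superdiag_mul hu₁.1 (isUnip_colElt j _), superdiag_colElt hij,
      hsuper, right_eq_add] at hmul
    simp [psiN, hmul]
  rw [huu₁, map_mul, Module.End.mul_apply, columnFourier_mem_whittakerFrom hl a u₁ hu₁, hpsi,
    one_mul, columnFourier_map_colElt, ha, zero_dotProduct, AddChar.map_zero_eq_one,
    Units.val_one, one_mul]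

/-- After a change of variable in `mirabolic K n j`, the frequency `a` becomes that of `ψ_n`. -/
lemma columnFourier_comp_mem_whittakerFrom {i j : Fin n} (hij : (j : ℕ) = i + 1) {a : Fin n → K}
    {l : V →ₗ[ℂ] ℂ} (hl : l ∈ whittakerFrom π ψ (j + 1)) {g : GL (Fin n) K}
    (hg : g ∈ mirabolic K n j) (hga : g.val i = truncate j a) :
    columnFourier π ψ j a l ∘ₗ π g⁻¹ ∈ whittakerFrom π ψ j := by
  refine mem_whittakerFrom_of_colElt
    (comp_mem_whittakerFrom (columnFourier_mem_whittakerFrom hl a) (inv_mem hg)) fun z v => ?_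
  have hdot : truncate j a ⬝ᵥ (g⁻¹.val *ᵥ truncate j z) = z i := by
    rw [← hga]
    change (g.val *ᵥ (g⁻¹.val *ᵥ truncate j z)) i = z i
    rw [mulVec_mulVec, Units.mul_inv, one_mulVec, truncate_of_lt (Fin.lt_def.2 (by lia))]
  rw [LinearMap.comp_apply, LinearMap.comp_apply, ← Module.End.mul_apply, ← map_mul,
    mul_colElt_of_mem_mirabolic (inv_mem hg), map_mul, Module.End.mul_apply,
    columnFourier_map_colElt, hdot, psiN, superdiag_colElt hij]

end WhittakerFrom

section Cuspidality

variable {n : ℕ} {V : Type*} [AddCommGroup V] [Module ℂ V]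
  {π : Representation ℂ (GL (Fin n) F) V} {ψ : AddChar F ℂˣ}

lemma IsCuspidal.sum_blockUpper (hπ : IsCuspidal π) {a b : ℕ} (h : a + b = n) (ha : 1 ≤ a)
    (hb : 1 ≤ b) : ∑ Y : Matrix (Fin a) (Fin b) F, π (blockUpper h Y) = 0 := by
  rw [← hπ a b ha hb h]
  refine Finset.sum_congr rfl fun Y _ => congrArg π (Units.ext ?_)
  exact (toGL_val_of_mul_eq_one (blockUpper h Y).val_inv).symm

lemma IsCuspidal.columnFourier_eq_zero (hπ : IsCuspidal π) {j : Fin n} (hj : (j : ℕ) ≠ 0)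
    {a : Fin n → F} (ha : truncate j a = 0) {l : V →ₗ[ℂ] ℂ}
    (hl : l ∈ whittakerFrom π ψ (j + 1)) : columnFourier π ψ j a l = 0 := by
  obtain ⟨b, hb⟩ := Nat.exists_eq_add_of_le j.2.le
  ext v
  have hsum := congrArg (columnFourier π ψ j a l) (LinearMap.congr_fun
    (hπ.sum_blockUpper hb.symm (Nat.one_le_iff_ne_zero.2 hj) (by lia)) v)
  simpa [LinearMap.sum_apply, columnFourier_map_of_isUnipFrom hj ha hl
    (isUnipFrom_of_val_eq_blocks hb.symm (blockUpper_val hb.symm _) IsUnip.one)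
    (mem_mirabolic_of_val_eq_blocks hb.symm (blockUpper_val hb.symm _) (i := 0)
      (fun _ _ => rfl) fun _ _ => rfl)] using hsum

/-- Expand `l` along column `j`: the zero frequency vanishes by cuspidality, and the mirabolic
subgroup moves every other frequency to the one that `ψ_n` has there, which lowers `j`. -/
theorem IsBesselPair.eq_zero_of_mem_whittakerFrom {lam : V →ₗ[ℂ] ℂ} {v₀ : V}
    (h : IsBesselPair π ψ lam v₀) (hψ : ψ.IsPrimitive) (hπ : IsCuspidal π) {j : ℕ}
    {l : V →ₗ[ℂ] ℂ} (hl : l ∈ whittakerFrom π ψ (j + 1))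
    (hzero : ∀ p ∈ mirabolic F n j, l (π p v₀) = 0) : l = 0 := by
  induction j generalizing l with
  | zero =>
    ext v
    have hv₀ : l v₀ = 0 := by simpa using hzero 1 (one_mem _)
    rw [h.apply_eq (isWhittaker_of_mem_whittakerFrom_one hl), hv₀, zero_mul, LinearMap.zero_apply]
  | succ i ih =>
    rcases le_or_gt n (i + 1) with hn | hn
    · exact ih (mem_whittakerFrom_of_le hn l) fun p hp => hzero p (mirabolic_mono i.le_succ hp)
    let j : Fin n := ⟨i + 1, hn⟩
    have hcoeff (a : Fin n → F) : columnFourier π ψ j a l = 0 := by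
      by_cases ha : truncate j a = 0
      · exact hπ.columnFourier_eq_zero i.succ_ne_zero ha hl
      obtain ⟨g, hg, hga⟩ := exists_mem_mirabolic_row_eq (i := ⟨i, by lia⟩) (j := j)
        (Fin.lt_def.2 i.lt_succ_self) ha fun _ hk => truncate_of_le hk a
      have hcomp : columnFourier π ψ j a l ∘ₗ π g⁻¹ = 0 :=
        ih (columnFourier_comp_mem_whittakerFrom rfl hl hg hga) fun p hp => by
          rw [LinearMap.comp_apply, columnFourier_apply]
          refine Finset.sum_eq_zero fun y _ => ?_
          rw [← Module.End.mul_apply, ← Module.End.mul_apply, ← map_mul, ← map_mul, hzero _ <|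
            mul_mem (mul_mem (colElt_mem_mirabolic j y) (inv_mem hg)) (mirabolic_mono i.le_succ hp),
            mul_zero]
      ext v
      simpa using LinearMap.congr_fun hcomp (π g v)
    have hsum := sum_columnFourier (π := π) hψ j l
    simpa [hcoeff] using hsum.symm

end Cuspidality

section Descent

variable {K : Type*} [Field K] {n : ℕ}

/-- The rows of index at least `j` of `M` are those of an upper triangular unipotent matrix. -/
def IsUnipBelow (j : ℕ) (M : Matrix (Fin n) (Fin n) K) : Prop :=
  ∀ i : Fin n, j ≤ i → M i i = 1 ∧ ∀ c < i, M i c = 0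

lemma isUnipBelow_of_mem_mirabolic {j : ℕ} {g : GL (Fin n) K} (hg : g ∈ mirabolic K n j) :
    IsUnipBelow j g.val :=
  fun i hi => ⟨by rw [hg i hi, one_apply_eq], fun c hc => by rw [hg i hi, one_apply_ne hc.ne']⟩

lemma IsUnipBelow.isUnip {M : Matrix (Fin n) (Fin n) K} (hM : IsUnipBelow 0 M) : IsUnip K M :=
  ⟨fun i => (hM i i.1.zero_le).1, fun i c hc => (hM i i.1.zero_le).2 c hc⟩

lemma IsUnipBelow.inv {j : ℕ} {g : GL (Fin n) K} (hg : IsUnipBelow j g.val) :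
    IsUnipBelow j g⁻¹.val := by
  intro i
  induction i using WellFoundedGT.induction with
  | ind i ih =>
    intro hi
    have hrow (c : Fin n) (hc : c ≤ i) : g⁻¹.val i c = (1 : Matrix _ _ K) i c := by
      rw [← Units.mul_inv g, mul_apply, Finset.sum_eq_single i, (hg i hi).1, one_mul]
      · intro k _ hk
        rcases lt_or_gt_of_ne hk with hki | hik
        · rw [(hg i hi).2 k hki, zero_mul]
        · rw [(ih k hik (hi.trans hik.le)).2 c (hc.trans_lt hik), mul_zero]
      · simp
    exact ⟨by rw [hrow i le_rfl, one_apply_eq],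
      fun c hc => by rw [hrow c hc.le, one_apply_ne hc.ne']⟩

lemma IsUnipBelow.mulVec_truncate_apply {j i : Fin n} {M : Matrix (Fin n) (Fin n) K}
    (hM : IsUnipBelow j M) (hi : j ≤ i) (y : Fin n → K) : (M *ᵥ truncate j y) i = 0 := by
  rw [mulVec, dotProduct]
  refine Finset.sum_eq_zero fun c _ => ?_
  rcases lt_or_ge c j with hc | hc
  · rw [(hM i hi).2 c (hc.trans_le hi), zero_mul]
  · rw [truncate_of_le hc, mul_zero]

lemma IsUnipBelow.exists_mul_colElt_eq {i j : Fin n} (hij : (j : ℕ) = i + 1) {g : GL (Fin n) K}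
    (hg : IsUnipBelow j g.val) (y : Fin n → K) :
    ∃ u, IsUnip K u.val ∧ superdiag K u.val = (g.val *ᵥ truncate j y) i ∧
      g * colElt j y = u * g := by
  have hval : (g * colElt j y * g⁻¹).val =
      1 + vecMulVec (g.val *ᵥ truncate j y) (g⁻¹.val j) := by
    rw [Units.val_mul, Units.val_mul, colElt_val, mul_add, add_mul, mul_one, Units.mul_inv,
      mul_vecMulVec, vecMulVec_mul, single_one_vecMul]
    rfl
  have hzero (s t : Fin n) (hst : j ≤ s ∨ t < j) :
      vecMulVec (g.val *ᵥ truncate j y) (g⁻¹.val j) s t = 0 := by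
    rw [vecMulVec_apply]
    rcases hst with hs | ht
    · rw [hg.mulVec_truncate_apply hs, zero_mul]
    · rw [(hg.inv j le_rfl).2 t ht, mul_zero]
  refine ⟨g * colElt j y * g⁻¹, ?_, ?_, by rw [inv_mul_cancel_right]⟩
  · rw [hval]
    exact isUnip_one_add fun s t hts => hzero s t (by lia)
  · rw [hval, superdiag_one_add, superdiag_eq_apply hij fun s t hst htj => hzero s t (by lia),
      vecMulVec_apply, (hg.inv j le_rfl).1, mul_one]

/-- Moving `colElt j y` from the right of `g` to its left compares the two equivariances. -/
lemma IsUnipBelow.apply_eq_one_apply {ψ : AddChar K ℂˣ} (hψ : ψ.IsPrimitive) {Φ : GL (Fin n) K → ℂ}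
    (hΦ : ∀ u g, IsUnip K u.val → Φ (u * g) = psiN ψ u * Φ g) {i j : Fin n}
    (hij : (j : ℕ) = i + 1) {g : GL (Fin n) K} (hg : IsUnipBelow j g.val) (hg0 : Φ g ≠ 0)
    {c : Fin n} (hcj : c < j) (hcol : ∀ t, Φ (g * colElt j (Pi.single c t)) =
      psiN ψ (colElt j (Pi.single c t)) * Φ g) : g.val i c = (1 : Matrix _ _ K) i c := by
  refine eq_of_forall_addChar_mul_eq hψ fun t => ?_
  have htrunc : truncate j (Pi.single c t) = Pi.single c t :=
    truncate_eq_self fun k hk => by simp [(hcj.trans_le hk).ne']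
  obtain ⟨u, hu, hsuper, hgu⟩ := hg.exists_mul_colElt_eq hij (Pi.single c t)
  have hpsi := hcol t
  rw [hgu, hΦ u g hu, mul_left_inj' hg0, psiN, psiN, Units.val_inj, hsuper, htrunc,
    superdiag_colElt hij] at hpsi
  simpa [mulVec_single, mul_comm, one_apply, Pi.single_apply] using hpsi

end Descent

section Support

variable {n : ℕ} {V : Type*} [AddCommGroup V] [Module ℂ V]
  {π : Representation ℂ (GL (Fin n) F) V} {ψ : AddChar F ℂˣ} {lam : V →ₗ[ℂ] ℂ} {v₀ : V}

lemma IsBesselPair.isUnip_of_apply_ne_zero (h : IsBesselPair π ψ lam v₀) (hψ : ψ.IsPrimitive)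
    {j : ℕ} (hj : j < n) {g : GL (Fin n) F} (hg : IsUnipBelow j g.val)
    (hg0 : lam (π g v₀) ≠ 0) : IsUnip F g.val := by
  induction j with
  | zero => exact hg.isUnip
  | succ i ih =>
    have hrow (c : Fin n) (hc : (c : ℕ) < i + 1) :
        g.val ⟨i, by lia⟩ c = (1 : Matrix (Fin n) (Fin n) F) ⟨i, by lia⟩ c := by
      refine IsUnipBelow.apply_eq_one_apply (j := ⟨i + 1, hj⟩) (Φ := fun x => lam (π x v₀)) hψ
        (fun u x hu => ?_) rfl hg hg0 hc fun t => ?_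
      · simp only [map_mul, Module.End.mul_apply, h.isWhittaker u hu]
      · simp only [map_mul, Module.End.mul_apply, h.map_apply (isUnip_colElt _ _), map_smul,
          smul_eq_mul]
    refine ih (by lia) fun s hs => ?_
    rcases hs.eq_or_lt with rfl | hs
    · exact ⟨by rw [hrow s s.1.lt_succ_self, one_apply_eq], fun c hc => by
        rw [hrow c (Nat.lt_succ_of_lt hc), one_apply_ne hc.ne']⟩
    · exact hg s hs

lemma IsBesselPair.apply_eq_zero_of_mem_mirabolic (h : IsBesselPair π ψ lam v₀)
    (hψ : ψ.IsPrimitive) {j : ℕ} (hj : j < n) {g : GL (Fin n) F} (hg : g ∈ mirabolic F n j)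
    (hgu : ¬IsUnip F g.val) : lam (π g v₀) = 0 :=
  not_imp_comm.1 (h.isUnip_of_apply_ne_zero hψ hj (isUnipBelow_of_mem_mirabolic hg)) hgu

end Support

section RankinSelbergBlocks

/-- The matrices whose nonzero entries lie in the first `a` rows. -/
def topRows (K : Type*) [Field K] (p m a : ℕ) : AddSubgroup (Matrix (Fin p) (Fin m) K) where
  carrier := {X | ∀ i : Fin p, a ≤ i → X i = 0}
  zero_mem' _ _ := rfl
  add_mem' hX hY i hi := (congrArg₂ (· + ·) (hX i hi) (hY i hi)).trans (add_zero _)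
  neg_mem' hX i hi := (congrArg Neg.neg (hX i hi)).trans neg_zero

/-- The matrices whose nonzero entries lie in the columns of index at least `c`. -/
def rightCols (K : Type*) [Field K] (m p c : ℕ) : AddSubgroup (Matrix (Fin m) (Fin p) K) where
  carrier := {Y | ∀ i (j : Fin p), (j : ℕ) < c → Y i j = 0}
  zero_mem' _ _ _ := rfl
  add_mem' hX hY i j hj := by rw [Matrix.add_apply, hX i j hj, hY i j hj, add_zero]
  neg_mem' hX i j hj := by rw [Matrix.neg_apply, hX i j hj, neg_zero]

variable {K : Type*} [Field K] {m p n : ℕ}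

lemma isUnipBelow_blocks_iff (h : m + p = n) {A : Matrix (Fin m) (Fin m) K}
    {B : Matrix (Fin m) (Fin p) K} {C : Matrix (Fin p) (Fin m) K} {D : Matrix (Fin p) (Fin p) K}
    {i : ℕ} : IsUnipBelow (m + i) (blocks h h A B C D) ↔
      IsUnipBelow i D ∧ ∀ s : Fin p, i ≤ s → ∀ t, C s t = 0 := by
  subst h
  simp only [IsUnipBelow, Fin.forall_fin_add, Fin.lt_def, blocks_apply]
  constructor
  · rintro ⟨-, hD⟩
    refine ⟨fun s hs => ⟨?_, fun t ht => ?_⟩, fun s hs t => ?_⟩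
    · simpa using (hD s (by simpa)).1
    · simpa using (hD s (by simpa)).2.2 t (by simpa)
    · simpa using (hD s (by simpa)).2.1 t (by rw [Fin.val_castAdd, Fin.val_natAdd]; lia)
  · rintro ⟨hD, hC⟩
    refine ⟨fun s hs => by rw [Fin.val_castAdd] at hs; lia, fun s hs => ?_⟩
    have hs' : i ≤ s := by simpa using hs
    exact ⟨by simpa using (hD s hs').1, fun t _ => by simpa using hC s hs' t,
      fun t ht => by simpa using (hD s hs').2 t (by simpa using ht)⟩

lemma IsUnip.exists_eq_blocks_one (h : m + p = n) {c : ℕ} {M : Matrix (Fin n) (Fin n) K}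
    (hM : IsUnip K M) (hcol : ∀ i j : Fin n, (i : ℕ) < m → (j : ℕ) < m + c →
      M i j = (1 : Matrix _ _ K) i j) :
    ∃ Y ∈ rightCols K m p c, ∃ D, IsUnip K D ∧ M = blocks h h 1 Y 0 D := by
  subst h
  obtain ⟨A, Y, C, D, rfl⟩ := exists_eq_blocks rfl rfl M
  obtain ⟨-, rfl, hD⟩ := (isUnip_blocks_iff rfl).1 hM
  have hA : A = 1 := by
    ext i j
    simpa [blocks, one_apply] using
      hcol (Fin.castAdd p i) (Fin.castAdd p j) (by simp) (by rw [Fin.val_castAdd]; lia)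
  refine ⟨Y, fun i j hj => ?_, D, hD, by rw [hA]⟩
  have hne : Fin.castAdd p i ≠ Fin.natAdd m j := Fin.ne_of_val_ne (by simp; lia)
  simpa [blocks, one_apply_ne hne] using
    hcol (Fin.castAdd p i) (Fin.natAdd m j) (by simp) (by simpa using hj)

lemma mul_mem_topRows {a : ℕ} {X : Matrix (Fin p) (Fin m) K} (hX : X ∈ topRows K p m a)
    (A : Matrix (Fin m) (Fin m) K) : X * A ∈ topRows K p m a := fun i hi => by
  rw [mul_apply_eq_vecMul, hX i hi, zero_vecMul]

lemma mul_mem_rightCols {c : ℕ} {Y : Matrix (Fin m) (Fin p) K} (hY : Y ∈ rightCols K m p c)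
    (A : Matrix (Fin m) (Fin m) K) : A * Y ∈ rightCols K m p c := fun i j hj => by
  rw [mul_apply]
  exact Finset.sum_eq_zero fun k _ => by rw [hY k j hj, mul_zero]

lemma mul_mem_rightCols_of_isUnip {c : ℕ} {Y : Matrix (Fin m) (Fin p) K}
    (hY : Y ∈ rightCols K m p c) {D : Matrix (Fin p) (Fin p) K} (hD : IsUnip K D) :
    Y * D ∈ rightCols K m p c := by
  intro i j hj
  rw [mul_apply]
  refine Finset.sum_eq_zero fun k _ => ?_
  rcases lt_or_ge (k : ℕ) c with hk | hk
  · rw [hY i k hk, zero_mul]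
  · rw [hD.2 k j (by lia), mul_zero]

lemma mul_eq_zero_of_mem_rightCols_of_mem_topRows {a c : ℕ} (hac : a ≤ c)
    {Y : Matrix (Fin m) (Fin p) K} (hY : Y ∈ rightCols K m p c) {X : Matrix (Fin p) (Fin m) K}
    (hX : X ∈ topRows K p m a) : Y * X = 0 := by
  ext i j
  rw [mul_apply]
  refine Finset.sum_eq_zero fun k _ => ?_
  rcases lt_or_ge (k : ℕ) c with hk | hk
  · rw [hY i k hk, zero_mul]
  · rw [hX k (hac.trans hk), Pi.zero_apply, mul_zero]

lemma blockUpper_mul_blockEmbed (h : m + p = n) (Y : Matrix (Fin m) (Fin p) K) (g : GL (Fin m) K) :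
    blockUpper h Y * blockEmbed h g = blockEmbed h g * blockUpper h (g⁻¹.val * Y) := by
  have hY : g.val * (g⁻¹.val * Y) = Y := by rw [← Matrix.mul_assoc, Units.mul_inv, Matrix.one_mul]
  refine Units.ext ?_
  rw [Units.val_mul, Units.val_mul, blockUpper_val, blockUpper_val, blockEmbed_val, blocks_mul,
    blocks_mul, hY]
  simp

lemma blockLower_mul_blockEmbed (h : m + p = n) (X : Matrix (Fin p) (Fin m) K) (g : GL (Fin m) K) :
    blockLower h X * blockEmbed h g = blockEmbed h g * blockLower h (X * g.val) :=
  Units.ext (by simp [blockLower_val, blockEmbed_val, blocks_mul])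

lemma blockLower_zero (h : m + p = n) : blockLower h (0 : Matrix (Fin p) (Fin m) K) = 1 :=
  Units.ext (blocks_one h)

lemma blockLower_add (h : m + p = n) (X X' : Matrix (Fin p) (Fin m) K) :
    blockLower h (X + X') = blockLower h X * blockLower h X' :=
  Units.ext (by simp [blockLower_val, blocks_mul])

lemma blockLower_inv (h : m + p = n) (X : Matrix (Fin p) (Fin m) K) :
    (blockLower h X)⁻¹ = blockLower h (-X) :=
  Units.ext rfl

lemma isUnip_blockEmbed_iff (h : m + p = n) {g : GL (Fin m) K} :
    IsUnip K (blockEmbed h g).val ↔ IsUnip K g.val := by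
  simp [blockEmbed_val, isUnip_blocks_iff, IsUnip.one]

lemma superdiag_blockEmbed (h : m + p = n) (g : GL (Fin m) K) :
    superdiag K (blockEmbed h g).val = superdiag K g.val := by
  rw [blockEmbed_val, superdiag_blocks h (B := 0) fun _ _ _ _ => rfl, superdiag_one, add_zero]

lemma superdiag_blockUpper (h : m + p = n) {c : ℕ} (hc : 0 < c) {Y : Matrix (Fin m) (Fin p) K}
    (hY : Y ∈ rightCols K m p c) : superdiag K (blockUpper h Y).val = 0 := by
  rw [blockUpper_val, superdiag_blocks h fun i j _ hj => hY i j (hj ▸ hc), superdiag_one,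
    superdiag_one, add_zero]

lemma isUnip_blockUpper (h : m + p = n) (Y : Matrix (Fin m) (Fin p) K) :
    IsUnip K (blockUpper h Y).val := by
  rw [blockUpper_val, isUnip_blocks_iff]
  exact ⟨IsUnip.one, rfl, IsUnip.one⟩

lemma blockLower_mem_mirabolic (h : m + p = n) {a : ℕ} {X : Matrix (Fin p) (Fin m) K}
    (hX : X ∈ topRows K p m a) : blockLower h X ∈ mirabolic K n (m + a) :=
  mem_mirabolic_of_val_eq_blocks h (blockLower_val h X) hX fun _ _ => rfl

lemma blockEmbed_mem_mirabolic (h : m + p = n) (a : ℕ) (g : GL (Fin m) K) :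
    blockEmbed h g ∈ mirabolic K n (m + a) :=
  mem_mirabolic_of_val_eq_blocks h (blockEmbed_val h g) (fun _ _ => rfl) fun _ _ => rfl

lemma blockEmbed_mul_blockLower_mem_mirabolic (h : m + p = n) {a : ℕ} (g : GL (Fin m) K)
    {X : Matrix (Fin p) (Fin m) K} (hX : X ∈ topRows K p m a) :
    blockEmbed h g * blockLower h X ∈ mirabolic K n (m + a) :=
  mul_mem (blockEmbed_mem_mirabolic h a g) (blockLower_mem_mirabolic h hX)

lemma isUnip_blockEmbed_mul_blockLower_iff (h : m + p = n) {g : GL (Fin m) K}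
    {X : Matrix (Fin p) (Fin m) K} :
    IsUnip K (blockEmbed h g * blockLower h X).val ↔ IsUnip K g.val ∧ X = 0 := by
  rw [Units.val_mul, blockEmbed_val, blockLower_val, blocks_mul, isUnip_blocks_iff]
  simp [IsUnip.one]

/-- `Y X = 0`, so the conjugate of `blockLower h X` by `blockSwap h * blockUpper h Y` is the block
matrix `[1 - X Y, X; 0, 1]`. -/
lemma exists_blockSwap_mul_blockLower_eq (h : m + p = n) {a c : ℕ} (hac : a < c) (hap : a < p)
    {Y : Matrix (Fin m) (Fin p) K} (hY : Y ∈ rightCols K m p c)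
    {X : Matrix (Fin p) (Fin m) K} (hX : X ∈ topRows K p m a) :
    ∃ u, IsUnip K u.val ∧ superdiag K u.val = 0 ∧
      blockSwap h * blockUpper h Y * blockLower h X = u * (blockSwap h * blockUpper h Y) := by
  have hYX := mul_eq_zero_of_mem_rightCols_of_mem_topRows hac.le hY hX
  have hinner : (blockUpper h Y * blockLower h X * (blockUpper h Y)⁻¹).val =
      blocks h h 1 0 X (1 - X * Y) := by
    have hinv : (blockUpper h Y)⁻¹.val = blocks h h 1 (-Y) 0 1 := rfl
    rw [Units.val_mul, Units.val_mul, hinv, blockUpper_val, blockLower_val, blocks_mul, blocks_mul]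
    simp [hYX, sub_eq_neg_add]
  have hXY (i j : Fin p) (hij : (j : ℕ) ≤ i + 1) : (-(X * Y)) i j = 0 := by
    rw [Matrix.neg_apply, neg_eq_zero]
    rcases lt_or_ge (i : ℕ) a with hi | hi
    · rw [mul_apply]
      exact Finset.sum_eq_zero fun k _ => by rw [hY k j (by lia), mul_zero]
    · rw [mul_apply_eq_vecMul, hX i hi, zero_vecMul, Pi.zero_apply]
  have hval := blockSwap_conj_val h hinner
  refine ⟨blockSwap h * (blockUpper h Y * blockLower h X * (blockUpper h Y)⁻¹) * (blockSwap h)⁻¹,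
    ?_, ?_, by group⟩
  · rw [hval, isUnip_blocks_iff, sub_eq_add_neg]
    exact ⟨isUnip_one_add fun i j hij => hXY i j (by lia), rfl, IsUnip.one⟩
  · rw [hval, superdiag_blocks _ fun i j hi _ => congrFun (hX i (by lia)) j, superdiag_one,
      add_zero, sub_eq_add_neg, superdiag_one_add]
    exact superdiag_eq_zero fun i j hij => hXY i j hij.le

lemma exists_blockSwap_mul_eq (h : m + p = n) (Y : Matrix (Fin m) (Fin p) K) (g : GL (Fin m) K)
    {u : GL (Fin n) K} {Y' : Matrix (Fin m) (Fin p) K} {D : Matrix (Fin p) (Fin p) K}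
    (hu : u.val = blocks h h 1 Y' 0 D) (hD : IsUnip K D) :
    ∃ u' : GL (Fin n) K, IsUnip K u'.val ∧ superdiag K u'.val = superdiag K D ∧
      blockSwap h * blockUpper h Y * blockEmbed h g * u =
        u' * (blockSwap h * blockUpper h (g.val * Y' + Y * D) * blockEmbed h g) := by
  classical
  have hpm : p + m = n := by lia
  have hu' : IsUnip K (blocks hpm hpm D 0 0 (1 : Matrix (Fin m) (Fin m) K)) :=
    (isUnip_blocks_iff hpm).2 ⟨hD, rfl, IsUnip.one⟩
  refine ⟨toGL (blocks hpm hpm D 0 0 1), hu'.toGL_val.symm ▸ hu', ?_, Units.ext ?_⟩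
  · rw [hu'.toGL_val, superdiag_blocks hpm (B := 0) fun _ _ _ _ => rfl, superdiag_one, add_zero]
  · simp [hu'.toGL_val, blockSwap_val, blockUpper_val, blockEmbed_val, hu, blocks_mul]

end RankinSelbergBlocks

section LowerUnipotentDescent

variable {K : Type*} [Field K] {m p n : ℕ}

lemma det_blocks_zero₂₁ (h : m + p = n) (A : Matrix (Fin m) (Fin m) K)
    (B : Matrix (Fin m) (Fin p) K) (D : Matrix (Fin p) (Fin p) K) :
    (blocks h h A B 0 D).det = A.det * D.det := by
  rw [blocks, det_reindex_self, det_fromBlocks_zero₂₁]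

lemma IsUnipBelow.exists_isUnip_mul_blockEmbed (h : m + p = n) {q : GL (Fin n) K}
    (hq : IsUnipBelow m q.val) : ∃ g : GL (Fin m) K, IsUnip K (q * blockEmbed h g).val := by
  obtain ⟨A, B, C, D, hval⟩ := exists_eq_blocks h h q.val
  rw [hval] at hq
  obtain ⟨hD, hC⟩ := (isUnipBelow_blocks_iff h (i := 0)).1 hq
  obtain rfl : C = 0 := by ext s t; exact hC s s.1.zero_le t
  have hA : A.det ≠ 0 := by
    have hdet := (isUnits_det_units q).ne_zero
    rw [hval, det_blocks_zero₂₁] at hdet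
    exact left_ne_zero_of_mul hdet
  refine ⟨(GeneralLinearGroup.mkOfDetNeZero A hA)⁻¹, ?_⟩
  have hAinv : A * (GeneralLinearGroup.mkOfDetNeZero A hA)⁻¹.val = 1 :=
    Units.mul_inv (GeneralLinearGroup.mkOfDetNeZero A hA)
  rw [Units.val_mul, hval, blockEmbed_val, blocks_mul, isUnip_blocks_iff, hAinv]
  simpa [IsUnip.one] using hD.isUnip

lemma IsUnipBelow.exists_isUnipBelow_mul_blockLower (h : m + p = n) {i : Fin p}
    {q : GL (Fin n) K} (hq : IsUnipBelow (m + (i + 1)) q.val)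
    (hrow : ∀ r c : Fin n, (r : ℕ) = m + i → m ≤ c → c ≤ r →
      q.val r c = (1 : Matrix _ _ K) r c) :
    ∃ X ∈ topRows K p m (i + 1), IsUnipBelow (m + i) (q * blockLower h X).val := by
  subst h
  obtain ⟨A, B, C, D, hval⟩ := exists_eq_blocks rfl rfl q.val
  rw [hval, isUnipBelow_blocks_iff] at hq
  obtain ⟨hD, hC⟩ := hq
  have hDi (s : Fin p) (hs : i ≤ s) (t : Fin p) (ht : t ≤ s) : D s t = (1 : Matrix _ _ K) s t := by
    rcases hs.eq_or_lt with rfl | his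
    · have := hrow (Fin.natAdd m i) (Fin.natAdd m t) rfl (by simp) (by simpa using ht)
      simpa [hval, blocks, one_apply] using this
    · rcases ht.eq_or_lt with rfl | hts
      · rw [(hD t his).1, one_apply_eq]
      · rw [(hD s his).2 t hts, one_apply_ne hts.ne']
  refine ⟨-vecMulVec (Pi.single i 1) (C i), fun s hs => ?_, ?_⟩
  · ext t
    simp [vecMulVec_apply, show s ≠ i by rintro rfl; lia]
  · rw [Units.val_mul, hval, blockLower_val, blocks_mul, isUnipBelow_blocks_iff]
    refine ⟨fun s hs => ?_, fun s hs t => ?_⟩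
    · simpa using ⟨by rw [hDi s hs s le_rfl, one_apply_eq],
        fun t ht => by rw [hDi s hs t ht.le, one_apply_ne ht.ne']⟩
    · rcases hs.eq_or_lt with his | his
      · obtain rfl := Fin.ext his
        simp [mul_vecMulVec, vecMulVec_apply, hDi i le_rfl i le_rfl]
      · simp [mul_vecMulVec, vecMulVec_apply, hDi s hs i hs, hC s his,
          one_apply_ne (Fin.ne_of_gt his)]

/-- If `Φ` does not vanish at `q`, then the entries of `q` in the rows of index `m + i` with
`i ≤ a` and in the columns of index at least `m` are forced to be unipotent, one row after the
other; the entries in the first `m` columns are removed by the right translations. -/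
theorem exists_isUnip_mul_of_apply_ne_zero {ψ : AddChar K ℂˣ} (hψ : ψ.IsPrimitive) (h : m + p = n)
    {a : ℕ} (ha : a < p) {Φ : GL (Fin n) K → ℂ}
    (hΦ : ∀ u g, IsUnip K u.val → Φ (u * g) = psiN ψ u * Φ g)
    (hlower : ∀ g, ∀ X ∈ topRows K p m a, Φ (g * blockLower h X) = Φ g)
    (hcol : ∀ (g) (j c : Fin n) (t : K), m ≤ c → Φ (g * colElt j (Pi.single c t)) =
      psiN ψ (colElt j (Pi.single c t)) * Φ g)
    {i : ℕ} (hi : i ≤ a) {q : GL (Fin n) K} (hq : IsUnipBelow (m + i) q.val) (hq0 : Φ q ≠ 0) :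
    ∃ X ∈ topRows K p m a, ∃ g, IsUnip K (q * blockLower h X * blockEmbed h g).val := by
  induction i generalizing q with
  | zero =>
    obtain ⟨g, hg⟩ := hq.exists_isUnip_mul_blockEmbed h
    refine ⟨0, zero_mem _, g, ?_⟩
    rwa [blockLower_zero, mul_one]
  | succ i ih =>
    obtain ⟨X, hX, hqX⟩ := hq.exists_isUnipBelow_mul_blockLower h (i := ⟨i, by lia⟩)
      fun r c hr hmc hcr => IsUnipBelow.apply_eq_one_apply (j := ⟨m + (i + 1), by lia⟩) hψ hΦ
        (by simp [hr, add_assoc]) hq hq0 (Fin.lt_def.2 (by simp; lia)) fun t => hcol q _ c t hmc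
    have hXa : X ∈ topRows K p m a := fun s hs => hX s (hi.trans hs)
    obtain ⟨X', hX', g, hg⟩ := ih (by lia) hqX (by rwa [hlower q X hXa])
    refine ⟨X + X', add_mem hXa hX', g, ?_⟩
    rwa [blockLower_add, ← mul_assoc]

end LowerUnipotentDescent

section RankinSelbergForm

variable {K : Type*} [Field K] {m p n : ℕ} {V W : Type*} [AddCommGroup V] [Module ℂ V]
  [AddCommGroup W] [Module ℂ W]

/-- The properties shared by the bilinear forms on the two sides of the functional equation, which
determine them up to a scalar. The integer `m + a` is the size of the upper left block outside of
which `A(g,x)` is the identity. -/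
structure IsRankinSelbergForm (h : m + p = n) (π : Representation ℂ (GL (Fin n) K) V)
    (τ : Representation ℂ (GL (Fin m) K) W) (ψ : AddChar K ℂˣ) (v₀ : V) (a : ℕ)
    (B : V →ₗ[ℂ] W →ₗ[ℂ] ℂ) : Prop where
  map_blockEmbed : ∀ g v w, B (π (blockEmbed h g) v) (τ g w) = B v w
  map_blockLower : ∀ X ∈ topRows K p m a, ∀ v w, B (π (blockLower h X) v) w = B v w
  flip_mem : ∀ w, B.flip w ∈ whittakerFrom π ψ (m + a + 1)
  map_eq_zero : ∀ q ∈ mirabolic K n (m + a),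
    (∀ g, ∀ X ∈ topRows K p m a, ¬IsUnip K (blockEmbed h g * blockLower h X * q).val) →
      B (π q v₀) = 0

lemma IsRankinSelbergForm.smul_sub_smul {h : m + p = n}
    {π : Representation ℂ (GL (Fin n) K) V} {τ : Representation ℂ (GL (Fin m) K) W}
    {ψ : AddChar K ℂˣ} {v₀ : V} {a : ℕ} {B B' : V →ₗ[ℂ] W →ₗ[ℂ] ℂ}
    (hB : IsRankinSelbergForm h π τ ψ v₀ a B)
    (hB' : IsRankinSelbergForm h π τ ψ v₀ a B') (c c' : ℂ) :
    IsRankinSelbergForm h π τ ψ v₀ a (c • B - c' • B') where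
  map_blockEmbed g v w := by simp [hB.map_blockEmbed, hB'.map_blockEmbed]
  map_blockLower X hX v w := by simp [hB.map_blockLower X hX, hB'.map_blockLower X hX]
  flip_mem w := Submodule.sub_mem _ (Submodule.smul_mem _ c (hB.flip_mem w))
    (Submodule.smul_mem _ c' (hB'.flip_mem w))
  map_eq_zero q hq hqu := by simp [hB.map_eq_zero q hq hqu, hB'.map_eq_zero q hq hqu]

end RankinSelbergForm

section RankinSelbergSum

variable {m n : ℕ} {V W : Type*} [AddCommGroup V] [Module ℂ V] [AddCommGroup W] [Module ℂ W]
  {π : Representation ℂ (GL (Fin n) F) V} {τ : Representation ℂ (GL (Fin m) F) W}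
  {ψ : AddChar F ℂˣ} {lam : V →ₗ[ℂ] ℂ} {v₀ : V} {mu : W →ₗ[ℂ] ℂ} {w₀ : W}

/-- The Rankin–Selberg sum of the Whittaker functions of `v` and `w`, where `x g i` is the argument
of the former, as a bilinear form in `v` and `w`. -/
noncomputable def rankinSelberg {ι : Type*} [Fintype ι] (π : Representation ℂ (GL (Fin n) F) V)
    (τ : Representation ℂ (GL (Fin m) F) W) (lam : V →ₗ[ℂ] ℂ) (mu : W →ₗ[ℂ] ℂ)
    (x : GL (Fin m) F → ι → GL (Fin n) F) : V →ₗ[ℂ] W →ₗ[ℂ] ℂ :=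
  ∑ g, ∑ i, (LinearMap.mul ℂ ℂ).compl₁₂ (lam ∘ₗ π (x g i)) (mu ∘ₗ τ g)

lemma rankinSelberg_apply {ι : Type*} [Fintype ι] (x : GL (Fin m) F → ι → GL (Fin n) F) (v : V)
    (w : W) : rankinSelberg π τ lam mu x v w = ∑ g, ∑ i, lam (π (x g i) v) * mu (τ g w) := by
  simp [rankinSelberg, LinearMap.sum_apply]

lemma rankinSelberg_map_apply {ι : Type*} [Fintype ι] (x : GL (Fin m) F → ι → GL (Fin n) F)
    (g₀ : GL (Fin n) F) (v : V) (w : W) : rankinSelberg π τ lam mu x (π g₀ v) w =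
      ∑ g, ∑ i, lam (π (x g i * g₀) v) * mu (τ g w) := by
  simp only [rankinSelberg_apply, map_mul, Module.End.mul_apply]

lemma rankinSelberg_map_map {ι : Type*} [Fintype ι] (x : GL (Fin m) F → ι → GL (Fin n) F)
    (g₀ : GL (Fin n) F) (h₀ : GL (Fin m) F)
    (hx : ∀ g v, ∑ i, lam (π (x g i * g₀) v) = ∑ i, lam (π (x (g * h₀) i) v)) (v : V) (w : W) :
    rankinSelberg π τ lam mu x (π g₀ v) (τ h₀ w) = rankinSelberg π τ lam mu x v w := by
  rw [rankinSelberg_map_apply, rankinSelberg_apply]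
  refine Fintype.sum_equiv (Equiv.mulRight h₀) _ _ fun g => ?_
  rw [← Finset.sum_mul, ← Finset.sum_mul, hx, Equiv.coe_mulRight, map_mul, Module.End.mul_apply]

namespace IsRankinSelbergForm

variable {p : ℕ} {h : m + p = n} {a : ℕ} {B B' : V →ₗ[ℂ] W →ₗ[ℂ] ℂ}

lemma eq_zero (hB : IsRankinSelbergForm h π τ ψ v₀ a B) (hv₀ : IsBesselPair π ψ lam v₀)
    (hψ : ψ.IsPrimitive) (hπ : IsCuspidal π) (hzero : B v₀ = 0) : B = 0 := by
  suffices hflip : ∀ w, B.flip w = 0 by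
    ext v w
    exact LinearMap.congr_fun (hflip w) v
  refine fun w => hv₀.eq_zero_of_mem_whittakerFrom hψ hπ (hB.flip_mem w) fun q hq => ?_
  rw [LinearMap.flip_apply]
  by_cases hex : ∃ g, ∃ X ∈ topRows F p m a, IsUnip F (blockEmbed h g * blockLower h X * q).val
  · obtain ⟨g, X, hX, hu⟩ := hex
    rw [← hB.map_blockLower X hX, ← hB.map_blockEmbed g, ← Module.End.mul_apply,
      ← Module.End.mul_apply, ← map_mul, ← map_mul, hv₀.map_apply hu, map_smul,
      hzero, smul_zero, LinearMap.zero_apply]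
  · push Not at hex
    rw [hB.map_eq_zero q hq hex, LinearMap.zero_apply]

lemma isWhittaker (hB : IsRankinSelbergForm h π τ ψ v₀ a B) (hv₀ : IsBesselPair π ψ lam v₀) :
    IsWhittaker τ (psiN ψ⁻¹) (B v₀) := by
  intro u hu w
  have hmap := hB.map_blockEmbed u v₀ w
  rw [hv₀.map_apply ((isUnip_blockEmbed_iff h).2 hu), map_smul, LinearMap.smul_apply, smul_eq_mul,
    psiN_congr ψ (superdiag_blockEmbed h u)] at hmap
  rw [← hmap, ← psiN_inv_eq, inv_mul_cancel_left₀ (psiN_ne_zero ψ u)]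

theorem mul_apply_eq (hB : IsRankinSelbergForm h π τ ψ v₀ a B)
    (hB' : IsRankinSelbergForm h π τ ψ v₀ a B') (hv₀ : IsBesselPair π ψ lam v₀)
    (hw₀ : IsBesselPair τ ψ⁻¹ mu w₀) (hψ : ψ.IsPrimitive) (hπ : IsCuspidal π) (v : V) (w : W) :
    B v₀ w₀ * B' v w = B' v₀ w₀ * B v w := by
  have hzero : B v₀ w₀ • B' - B' v₀ w₀ • B = 0 := by
    refine (hB'.smul_sub_smul hB _ _).eq_zero hv₀ hψ hπ (LinearMap.ext fun w => ?_)
    rw [LinearMap.sub_apply, LinearMap.smul_apply, LinearMap.smul_apply, LinearMap.sub_apply,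
      LinearMap.smul_apply, LinearMap.smul_apply, LinearMap.zero_apply, smul_eq_mul, smul_eq_mul,
      hw₀.apply_eq (hB.isWhittaker hv₀) w, hw₀.apply_eq (hB'.isWhittaker hv₀) w]
    ring
  simpa [sub_eq_zero] using LinearMap.congr_fun₂ hzero v w

end IsRankinSelbergForm

end RankinSelbergSum

lemma sum_subtype_comp {α M : Type*} [AddCommMonoid M] {P : α → Prop} [Fintype {x // P x}]
    {e : α → α} (he : e.Injective) (hP : ∀ x, P x → P (e x)) (f : α → M) :
    ∑ x : {x // P x}, f (e x) = ∑ x : {x // P x}, f x :=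
  Fintype.sum_bijective (Subtype.map e hP)
    (Finite.injective_iff_bijective.1 (Subtype.map_injective hP he)) _ _ fun _ => rfl

section LowerForm

variable {m p n : ℕ} {V W : Type*} [AddCommGroup V] [Module ℂ V] [AddCommGroup W] [Module ℂ W]
  {π : Representation ℂ (GL (Fin n) F) V} {τ : Representation ℂ (GL (Fin m) F) W}
  {ψ : AddChar F ℂˣ} {lam : V →ₗ[ℂ] ℂ} {v₀ : V} {mu : W →ₗ[ℂ] ℂ} {w₀ : W}

noncomputable instance (a : ℕ) : Fintype (topRows F p m a) :=
  Fintype.ofFinite _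

/-- The Rankin–Selberg sum over the matrices `A(g,x)`. -/
noncomputable def lowerForm (h : m + p = n) (a : ℕ) (π : Representation ℂ (GL (Fin n) F) V)
    (τ : Representation ℂ (GL (Fin m) F) W) (lam : V →ₗ[ℂ] ℂ) (mu : W →ₗ[ℂ] ℂ) :
    V →ₗ[ℂ] W →ₗ[ℂ] ℂ :=
  rankinSelberg π τ lam mu fun g (X : topRows F p m a) => blockEmbed h g * blockLower h X.1

lemma lowerForm_map_blockEmbed (h : m + p = n) (a : ℕ) (g : GL (Fin m) F) (v : V) (w : W) :
    lowerForm h a π τ lam mu (π (blockEmbed h g) v) (τ g w) = lowerForm h a π τ lam mu v w := by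
  refine rankinSelberg_map_map _ _ _ (fun g' v => ?_) v w
  refine Eq.trans (Fintype.sum_congr _ _ fun X => ?_)
    (sum_subtype_comp (mul_left_injective_of_inv g.val g⁻¹.val g.mul_inv)
      (fun X hX => mul_mem_topRows hX g.val)
      fun X => lam (π (blockEmbed h (g' * g) * blockLower h X) v))
  rw [mul_assoc, blockLower_mul_blockEmbed, ← mul_assoc, ← map_mul]

lemma lowerForm_map_blockLower (h : m + p = n) {a : ℕ} {X : Matrix (Fin p) (Fin m) F}
    (hX : X ∈ topRows F p m a) (v : V) (w : W) :
    lowerForm h a π τ lam mu (π (blockLower h X) v) w = lowerForm h a π τ lam mu v w := by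
  rw [lowerForm, rankinSelberg_map_apply, rankinSelberg_apply]
  refine Finset.sum_congr rfl fun g _ => ?_
  refine Eq.trans (Fintype.sum_congr _ _ fun X' => ?_)
    (sum_subtype_comp (add_left_injective X) (fun X' hX' => add_mem hX' hX)
      fun X' => lam (π (blockEmbed h g * blockLower h X') v) * mu (τ g w))
  rw [mul_assoc, blockLower_add]

lemma isRankinSelbergForm_lowerForm (h : m + p = n) {a : ℕ} (ha : a < p) (hψ : ψ.IsPrimitive)
    (hv₀ : IsBesselPair π ψ lam v₀) :
    IsRankinSelbergForm h π τ ψ v₀ a (lowerForm h a π τ lam mu) where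
  map_blockEmbed := lowerForm_map_blockEmbed h a
  map_blockLower _ hX := lowerForm_map_blockLower h hX
  flip_mem w u hu v := by
    simp only [LinearMap.flip_apply, lowerForm, rankinSelberg_apply, Finset.mul_sum]
    refine Finset.sum_congr rfl fun g _ => Finset.sum_congr rfl fun X _ => ?_
    have hmem := comp_mem_whittakerFrom (l := lam) (fun u hu => hv₀.isWhittaker u hu.1)
      (blockEmbed_mul_blockLower_mem_mirabolic h g X.2) u hu v
    rw [LinearMap.comp_apply, LinearMap.comp_apply] at hmem
    rw [hmem, mul_assoc]
  map_eq_zero q hq hqu := by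
    ext w
    rw [lowerForm, rankinSelberg_map_apply]
    refine Finset.sum_eq_zero fun g _ => Finset.sum_eq_zero fun X _ => ?_
    rw [hv₀.apply_eq_zero_of_mem_mirabolic hψ (by lia)
      (mul_mem (blockEmbed_mul_blockLower_mem_mirabolic h g X.2) hq) (hqu g X X.2), zero_mul]

lemma lowerForm_apply_self (h : m + p = n) {a : ℕ} (ha : a < p) (hψ : ψ.IsPrimitive)
    (hv₀ : IsBesselPair π ψ lam v₀) (hw₀ : IsBesselPair τ ψ⁻¹ mu w₀) :
    lowerForm h a π τ lam mu v₀ w₀ = (UnipFinset F m).card := by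
  classical
  have hterm (g : GL (Fin m) F) : ∑ X : topRows F p m a,
      lam (π (blockEmbed h g * blockLower h X.1) v₀) * mu (τ g w₀) =
        if IsUnip F g.val then 1 else 0 := by
    rw [Finset.sum_eq_single 0]
    · rw [AddSubgroup.coe_zero, blockLower_zero, mul_one]
      split_ifs with hg
      · rw [hv₀.map_apply ((isUnip_blockEmbed_iff h).2 hg), hw₀.map_apply hg, map_smul, map_smul,
          hv₀.apply_self, hw₀.apply_self, psiN_congr ψ (superdiag_blockEmbed h g), ← psiN_inv_eq]
        simp [psiN_ne_zero]
      · rw [hv₀.apply_eq_zero_of_mem_mirabolic hψ (by lia) (blockEmbed_mem_mirabolic h a g)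
          (by rwa [isUnip_blockEmbed_iff]), zero_mul]
    · intro X _ hX
      rw [hv₀.apply_eq_zero_of_mem_mirabolic hψ (by lia)
        (blockEmbed_mul_blockLower_mem_mirabolic h g X.2), zero_mul]
      rw [isUnip_blockEmbed_mul_blockLower_iff]
      exact fun hu => hX (Subtype.ext hu.2)
    · simp
  simp only [lowerForm, rankinSelberg_apply, hterm, Finset.sum_boole, UnipFinset]

end LowerForm

lemma isPrimitive_inv {R M : Type*} [CommRing R] [DivisionCommMonoid M] {ψ : AddChar R M}
    (hψ : ψ.IsPrimitive) : ψ⁻¹.IsPrimitive := by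
  intro a ha h
  refine hψ ha (inv_injective ?_)
  rw [inv_one, ← h]
  ext x
  rw [AddChar.inv_apply, AddChar.mulShift_apply, AddChar.mulShift_apply, AddChar.inv_apply, mul_neg]

section UpperForm

variable {m p n : ℕ} {V W : Type*} [AddCommGroup V] [Module ℂ V] [AddCommGroup W] [Module ℂ W]
  {π : Representation ℂ (GL (Fin n) F) V} {τ : Representation ℂ (GL (Fin m) F) W}
  {ψ : AddChar F ℂˣ} {lam : V →ₗ[ℂ] ℂ} {v₀ : V} {mu : W →ₗ[ℂ] ℂ} {w₀ : W}

noncomputable instance (c : ℕ) : Fintype (rightCols F m p c) :=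
  Fintype.ofFinite _

/-- The Rankin–Selberg sum over the matrices `B(g,y)`, with `y` in the columns of index at
least `c` of the lower right block. -/
noncomputable def upperForm (h : m + p = n) (c : ℕ) (π : Representation ℂ (GL (Fin n) F) V)
    (τ : Representation ℂ (GL (Fin m) F) W) (lam : V →ₗ[ℂ] ℂ) (mu : W →ₗ[ℂ] ℂ) :
    V →ₗ[ℂ] W →ₗ[ℂ] ℂ :=
  rankinSelberg π τ lam mu fun g (Y : rightCols F m p c) =>
    blockSwap h * blockUpper h Y.1 * blockEmbed h g

lemma upperForm_map_blockEmbed (h : m + p = n) (c : ℕ) (g : GL (Fin m) F) (v : V) (w : W) :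
    upperForm h c π τ lam mu (π (blockEmbed h g) v) (τ g w) = upperForm h c π τ lam mu v w :=
  rankinSelberg_map_map _ _ _ (fun g' v => by simp only [mul_assoc, map_mul]) v w

lemma upperForm_map_blockLower (h : m + p = n) {a c : ℕ} (hac : a < c) (hap : a < p)
    (hlam : IsWhittaker π (psiN ψ) lam) {X : Matrix (Fin p) (Fin m) F}
    (hX : X ∈ topRows F p m a) (v : V) (w : W) :
    upperForm h c π τ lam mu (π (blockLower h X) v) w = upperForm h c π τ lam mu v w := by
  rw [upperForm, rankinSelberg_map_apply, rankinSelberg_apply]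
  refine Fintype.sum_congr _ _ fun g => Fintype.sum_congr _ _ fun Y => ?_
  have hcomm : blockEmbed h g * blockLower h X =
      blockLower h (X * g⁻¹.val) * blockEmbed h g := by
    rw [blockLower_mul_blockEmbed, Matrix.mul_assoc, Units.inv_mul, Matrix.mul_one]
  obtain ⟨u, hu, hsuper, huX⟩ := exists_blockSwap_mul_blockLower_eq h hac hap Y.2
    (mul_mem_topRows hX g⁻¹.val)
  rw [mul_assoc, hcomm, ← mul_assoc, huX, mul_assoc, map_mul, Module.End.mul_apply, hlam u hu, psiN,
    hsuper, AddChar.map_zero_eq_one, Units.val_one, one_mul]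

lemma upperForm_map_of_isUnip (h : m + p = n) {c : ℕ} (hlam : IsWhittaker π (psiN ψ) lam)
    (hc : 0 < c) {u : GL (Fin n) F} (hu : IsUnip F u.val) (hcol : ∀ i j : Fin n, (i : ℕ) < m →
      (j : ℕ) < m + c → u.val i j = (1 : Matrix _ _ F) i j) (v : V) (w : W) :
    upperForm h c π τ lam mu (π u v) w = psiN ψ u * upperForm h c π τ lam mu v w := by
  obtain ⟨Y', hY', D, hD, hval⟩ := hu.exists_eq_blocks_one h hcol
  rw [upperForm, rankinSelberg_map_apply, rankinSelberg_apply, Finset.mul_sum]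
  refine Fintype.sum_congr _ _ fun g => ?_
  have hinj : Function.Injective fun Y : Matrix (Fin m) (Fin p) F => g.val * Y' + Y * D :=
    (add_right_injective _).comp
      (mul_left_injective_of_inv D D⁻¹ (mul_nonsing_inv D (by simp [hD.det_eq_one])))
  rw [Finset.mul_sum, ← sum_subtype_comp hinj
    (fun Y hY => add_mem (mul_mem_rightCols hY' g.val) (mul_mem_rightCols_of_isUnip hY hD))
    fun Y => psiN ψ u *
      (lam (π (blockSwap h * blockUpper h Y * blockEmbed h g) v) * mu (τ g w))]
  refine Fintype.sum_congr _ _ fun Y => ?_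
  obtain ⟨u', hu', hsuper, huY⟩ := exists_blockSwap_mul_eq h Y.1 g hval hD
  have hpsi : superdiag F u'.val = superdiag F u.val := by
    rw [hsuper, hval, superdiag_blocks h fun i j _ hj => hY' i j (hj ▸ hc), superdiag_one, zero_add]
  rw [huY, map_mul, Module.End.mul_apply, hlam u' hu', psiN_congr ψ hpsi, mul_assoc]

lemma upperForm_map_eq_zero (h : m + p = n) {a : ℕ} (ha : a < p) (hψ : ψ.IsPrimitive)
    (hv₀ : IsBesselPair π ψ lam v₀) {q : GL (Fin n) F} (hq : q ∈ mirabolic F n (m + a))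
    (hqu : ∀ g, ∀ X ∈ topRows F p m a, ¬IsUnip F (blockEmbed h g * blockLower h X * q).val) :
    upperForm h (a + 1) π τ lam mu (π q v₀) = 0 := by
  ext w
  by_contra hne
  let Φ (g : GL (Fin n) F) : ℂ := upperForm h (a + 1) π τ lam mu (π g⁻¹ v₀) w
  have hΦ (u g : GL (Fin n) F) (hu : IsUnip F u.val) : Φ (u * g) = psiN ψ⁻¹ u * Φ g := by
    simp only [Φ, _root_.mul_inv_rev, map_mul, Module.End.mul_apply, hv₀.map_apply hu.inv, map_smul,
      LinearMap.smul_apply, smul_eq_mul, psiN_inv ψ hu, psiN_inv_eq]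
  have hlower (g : GL (Fin n) F) (X : Matrix (Fin p) (Fin m) F) (hX : X ∈ topRows F p m a) :
      Φ (g * blockLower h X) = Φ g := by
    simp only [Φ, _root_.mul_inv_rev, map_mul, Module.End.mul_apply, blockLower_inv,
      upperForm_map_blockLower h a.lt_succ_self ha hv₀.isWhittaker (neg_mem hX)]
  have hcol (g : GL (Fin n) F) (j c : Fin n) (t : F) (hmc : m ≤ c) :
      Φ (g * colElt j (Pi.single c t)) = psiN ψ⁻¹ (colElt j (Pi.single c t)) * Φ g := by
    have hu := isUnip_colElt j (Pi.single c t)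
    simp only [Φ, _root_.mul_inv_rev, map_mul, Module.End.mul_apply]
    rw [upperForm_map_of_isUnip h hv₀.isWhittaker a.succ_pos hu.inv, psiN_inv ψ hu, psiN_inv_eq]
    intro i k hi _
    have hic : i ≠ c := Fin.ne_of_val_ne (by lia)
    simp [colElt_inv, colElt_apply, truncate, hic]
  obtain ⟨X, hX, g, hu⟩ := exists_isUnip_mul_of_apply_ne_zero (isPrimitive_inv hψ) h ha hΦ hlower
    hcol le_rfl (isUnipBelow_of_mem_mirabolic (inv_mem hq)) (by simpa [Φ] using hne)
  refine hqu g⁻¹ (-X) (neg_mem hX) ?_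
  rw [map_inv, ← blockLower_inv]
  simpa [mul_assoc] using hu.inv

lemma isRankinSelbergForm_upperForm (h : m + p = n) {a : ℕ} (ha : a < p) (hψ : ψ.IsPrimitive)
    (hv₀ : IsBesselPair π ψ lam v₀) :
    IsRankinSelbergForm h π τ ψ v₀ a (upperForm h (a + 1) π τ lam mu) where
  map_blockEmbed := upperForm_map_blockEmbed h (a + 1)
  map_blockLower _ hX := upperForm_map_blockLower h a.lt_succ_self ha hv₀.isWhittaker hX
  flip_mem w u hu v :=
    upperForm_map_of_isUnip h hv₀.isWhittaker a.succ_pos hu.1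
      (fun i j _ hj => hu.2 i j (by lia)) v w
  map_eq_zero _ := upperForm_map_eq_zero h ha hψ hv₀

lemma upperForm_apply_self (h : m + p = n) {c : ℕ} (hc : 0 < c) (hv₀ : IsBesselPair π ψ lam v₀)
    (w : W) :
    upperForm h c π τ lam mu v₀ w = (Fintype.card (rightCols F m p c) : ℂ) *
      ∑ g : GL (Fin m) F, lam (π (blockSwap h * blockEmbed h g) v₀) * mu (τ g w) := by
  have hfix {Y : Matrix (Fin m) (Fin p) F} (hY : Y ∈ rightCols F m p c) :
      π (blockUpper h Y) v₀ = v₀ := by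
    rw [hv₀.map_apply (isUnip_blockUpper h Y), psiN, superdiag_blockUpper h hc hY,
      AddChar.map_zero_eq_one, Units.val_one, one_smul]
  rw [upperForm, rankinSelberg_apply, Finset.mul_sum]
  refine Fintype.sum_congr _ _ fun g => ?_
  rw [← nsmul_eq_mul, ← Finset.card_univ, ← Finset.sum_const]
  refine Fintype.sum_congr _ _ fun Y => ?_
  rw [mul_assoc, blockUpper_mul_blockEmbed, ← mul_assoc, map_mul, Module.End.mul_apply,
    hfix (mul_mem_rightCols Y.2 _)]

end UpperForm

section Matching

variable {K : Type*} [Field K] {m p n : ℕ}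

/-- Padding by zero rows: the parameter `x` of `A(g,x)` as an element of `topRows`. -/
def topRowsEquiv {a : ℕ} (ha : a ≤ p) : Matrix (Fin a) (Fin m) K ≃ topRows K p m a where
  toFun x := ⟨of fun i j => if hi : (i : ℕ) < a then x ⟨i, hi⟩ j else 0,
    fun i hi => funext fun _ => dif_neg hi.not_gt⟩
  invFun X := X.1.submatrix (Fin.castLE ha) id
  left_inv x := by ext i j; simp
  right_inv X := by
    ext i j
    by_cases hi : (i : ℕ) < a
    · simp [hi]
    · simp [hi, X.2 i (not_lt.1 hi)]

/-- Padding by zero columns: the parameter `y` of `B(g,y)` as an element of `rightCols`. -/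
def rightColsEquiv {c k : ℕ} (hck : c + k = p) :
    Matrix (Fin m) (Fin k) K ≃ rightCols K m p c where
  toFun y := ⟨of fun i j => if hj : (j : ℕ) < c then 0 else y i ⟨j - c, by lia⟩,
    fun _ _ hj => dif_pos hj⟩
  invFun Y := Y.1.submatrix id fun j => Fin.cast hck (Fin.natAdd c j)
  left_inv y := by ext i j; simp
  right_inv Y := by
    ext i j
    by_cases hj : (j : ℕ) < c
    · simp [hj, Y.2 i j hj]
    · simp [hj, Nat.add_sub_cancel' (not_lt.1 hj)]

lemma card_rightCols [Fintype K] {c k : ℕ} (hck : c + k = p) :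
    Fintype.card (rightCols K m p c) = Fintype.card K ^ (k * m) := by
  rw [← Fintype.card_congr (rightColsEquiv hck),
    Fintype.card_congr (Matrix.of (m := Fin m) (n := Fin k) (α := K)).symm]
  simp [pow_mul]

variable {k : ℕ} (h : m + (n - m) = n) (hnm : m < n)

lemma Amat_eq_blocks (hk : k ≤ n - m - 1)
    (g : Matrix (Fin m) (Fin m) K) (x : Matrix (Fin (n - m - 1 - k)) (Fin m) K) :
    Amat hnm hk g x = blocks h h g 0 (topRowsEquiv (by lia) x).1 1 := by
  ext i j
  simp only [Amat, blocks_apply, topRowsEquiv, Equiv.coe_fn_mk, of_apply, Matrix.zero_apply,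
    one_apply, Fin.mk.injEq]
  split_ifs <;> first | rfl | lia

lemma Bmat_eq_blocks (hk : k ≤ n - m - 1) {c : ℕ} (hck : c + k = n - m)
    (g : Matrix (Fin m) (Fin m) K) (y : Matrix (Fin m) (Fin k) K) :
    Bmat hnm hk g y = blocks (Nat.sub_add_cancel hnm.le) h 0 1 g (rightColsEquiv hck y).1 := by
  ext i j
  simp only [Bmat, blocks_apply, rightColsEquiv, Equiv.coe_fn_mk, of_apply, Matrix.zero_apply,
    one_apply, Fin.mk.injEq]
  split_ifs <;> first | rfl | lia | exact congrArg (y _) (Fin.ext (by lia))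

lemma Cmat_eq_blocks (g : Matrix (Fin m) (Fin m) K) :
    Cmat hnm g = blocks (Nat.sub_add_cancel hnm.le) h 0 1 g 0 := by
  ext i j
  simp only [Cmat, blocks_apply, Matrix.zero_apply, one_apply, Fin.mk.injEq]
  split_ifs <;> first | rfl | lia

variable [DecidableEq K]

lemma toGL_Amat (hk : k ≤ n - m - 1) (g : GL (Fin m) K)
    (x : Matrix (Fin (n - m - 1 - k)) (Fin m) K) :
    toGL (Amat hnm hk g.val x) = blockEmbed h g * blockLower h (topRowsEquiv (by lia) x).1 := by
  rw [← toGL_coe (blockEmbed h g * blockLower h _), Amat_eq_blocks h hnm hk]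
  simp [blockEmbed_val, blockLower_val, blocks_mul]

lemma toGL_Bmat (hk : k ≤ n - m - 1) {c : ℕ} (hck : c + k = n - m) (g : GL (Fin m) K)
    (y : Matrix (Fin m) (Fin k) K) : toGL (Bmat hnm hk g.val y) =
      blockSwap h * blockUpper h (rightColsEquiv hck y).1 * blockEmbed h g := by
  rw [← toGL_coe (_ * blockEmbed h g), Bmat_eq_blocks h hnm hk hck]
  simp [blockEmbed_val, blockUpper_val, blockSwap_val, blocks_mul]

lemma toGL_Cmat (g : GL (Fin m) K) :
    toGL (Cmat hnm g.val) = blockSwap h * blockEmbed h g := by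
  rw [← toGL_coe (blockSwap h * blockEmbed h g), Cmat_eq_blocks h hnm]
  simp [blockEmbed_val, blockSwap_val, blocks_mul]

end Matching

section MatchingSums

variable {m n k : ℕ} {V W : Type*} [AddCommGroup V] [Module ℂ V] [AddCommGroup W] [Module ℂ W]
  (π : Representation ℂ (GL (Fin n) F) V) (τ : Representation ℂ (GL (Fin m) F) W)
  (lam : V →ₗ[ℂ] ℂ) (mu : W →ₗ[ℂ] ℂ)

lemma sum_Amat_eq_lowerForm (h : m + (n - m) = n) (hnm : m < n) (hk : k ≤ n - m - 1)
    (v : V) (w : W) :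
    ∑ g : GL (Fin m) F, ∑ x : Matrix (Fin (n - m - 1 - k)) (Fin m) F,
      lam (π (toGL (Amat hnm hk g.val x)) v) * mu (τ g w) =
        lowerForm h (n - m - 1 - k) π τ lam mu v w := by
  rw [lowerForm, rankinSelberg_apply]
  exact Fintype.sum_congr _ _ fun g => Fintype.sum_equiv (topRowsEquiv (by lia)) _ _ fun x => by
    rw [toGL_Amat h]

lemma sum_Bmat_eq_upperForm (h : m + (n - m) = n) (hnm : m < n) (hk : k ≤ n - m - 1) {c : ℕ}
    (hck : c + k = n - m) (v : V) (w : W) :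
    ∑ g : GL (Fin m) F, ∑ y : Matrix (Fin m) (Fin k) F,
      lam (π (toGL (Bmat hnm hk g.val y)) v) * mu (τ g w) = upperForm h c π τ lam mu v w := by
  rw [upperForm, rankinSelberg_apply]
  exact Fintype.sum_congr _ _ fun g => Fintype.sum_equiv (rightColsEquiv hck) _ _ fun y => by
    rw [toGL_Bmat h _ _ hck]

end MatchingSums

theorem gamma_eq_bessel_sum
    (q : ℕ) (hq : Fintype.card F = q)
    (ψ : AddChar F ℂˣ) (hψ : ∃ a : F, ψ a ≠ 1)
    (n m : ℕ) (hm1 : 1 ≤ m) (hnm : m < n)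
    {V W : Type*} [AddCommGroup V] [Module ℂ V] [FiniteDimensional ℂ V] [Nontrivial V]
    [AddCommGroup W] [Module ℂ W] [FiniteDimensional ℂ W] [Nontrivial W]
    (π : Representation ℂ (GL (Fin n) F) V)
    (τ : Representation ℂ (GL (Fin m) F) W)
    (hπirr : IsIrreducible π) (hπcusp : IsCuspidal π)
    (hτirr : IsIrreducible τ)
    (hτgen : ∃ mu : W →ₗ[ℂ] ℂ, mu ≠ 0 ∧ IsWhittaker τ (psiN ψ) mu) :
    ∀ (k : ℕ) (hk : k ≤ n - m - 1)
      (lam : V →ₗ[ℂ] ℂ), IsWhittaker π (psiN ψ) lam →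
      ∀ v : V, ∀ mu : W →ₗ[ℂ] ℂ, IsWhittaker τ (fun u => (psiN ψ u)⁻¹) mu → ∀ w : W,
      (((UnipFinset F m).card : ℂ)⁻¹ *
          ∑ g : GL (Fin m) F,
            Bessel π (psiN ψ) (toGL (Cmat hnm (Units.val g))) *
              Bessel τ (fun u => (psiN ψ u)⁻¹) g) *
          (q : ℂ) ^ (k * m) * ((UnipFinset F m).card : ℂ)⁻¹ *
          ∑ g : GL (Fin m) F, ∑ x : Matrix (Fin (n - m - 1 - k)) (Fin m) F,
            lam (π (toGL (Amat hnm hk (Units.val g) x)) v) * mu (τ g w)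
        = ((UnipFinset F m).card : ℂ)⁻¹ *
          ∑ g : GL (Fin m) F, ∑ y : Matrix (Fin m) (Fin k) F,
            lam (π (toGL (Bmat hnm hk (Units.val g) y)) v) * mu (τ g w) := by
  subst hq
  simp only [psiN_inv_eq]
  intro k hk lam hlam v mu hmu w
  have hψ' : ψ.IsPrimitive := AddChar.IsPrimitive.of_ne_one (AddChar.ne_one_iff.2 hψ)
  have h : m + (n - m) = n := Nat.add_sub_of_le hnm.le
  have ha : n - m - 1 - k < n - m := by lia
  have hck : n - m - 1 - k + 1 + k = n - m := by lia
  rcases eq_or_ne lam 0 with rfl | hlam0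
  · simp
  rcases eq_or_ne mu 0 with rfl | hmu0
  · simp
  obtain ⟨v₀, hv₀⟩ := exists_isBesselPair hψ' hπirr hlam hlam0
  obtain ⟨w₀, hw₀⟩ := exists_isBesselPair (isPrimitive_inv hψ') hτirr hmu hmu0
  have hform := (isRankinSelbergForm_lowerForm h ha hψ' hv₀ (mu := mu)).mul_apply_eq
    (isRankinSelbergForm_upperForm h ha hψ' hv₀ (mu := mu)) hv₀ hw₀ hψ' hπcusp v w
  rw [lowerForm_apply_self h ha hψ' hv₀ hw₀, upperForm_apply_self h (Nat.succ_pos _) hv₀,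
    card_rightCols hck, Nat.cast_pow] at hform
  simp only [hv₀.bessel_eq, hw₀.bessel_eq, toGL_Cmat h, sum_Amat_eq_lowerForm π τ lam mu h,
    sum_Bmat_eq_upperForm π τ lam mu h hnm hk hck]
  have hcard : ((UnipFinset F m).card : ℂ) ≠ 0 := by
    rw [card_unipFinset]
    exact Nat.cast_ne_zero.2 Fintype.card_ne_zero
  field_simp
  linear_combination -hform

end Stmt2
end

section
/- Let F ⊆ E be an extension of finite fields with |F| = q and [E : F] = n. A multiplicative character η : Eˣ → ℂˣ is F-regular (i.e. the n characters x ↦ η(x^{q^i}) for 0 ≤ i ≤ n−1 are pairwise distinct) if and only if there is no intermediate field K with F ⊆ K ⊊ E and no character η′ : Kˣ → ℂˣ such that η = η′ ∘ N_{E/K}, where N_{E/K} : Eˣ → Kˣ is the field norm. -/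
/-!
Statement 3: a multiplicative character of `Eˣ` is `F`-regular if and only if it does not
factor through the norm map `N_{E/K}` for any proper intermediate field `F ⊆ K ⊊ E`.
-/

namespace Stmt3

/-!
By Hilbert's Theorem 90, in a cyclic extension `E/K` the kernel of the norm on `Eˣ` consists of the
elements `σ y / y`, where `σ` generates `Gal(E/K)`. When the norm is onto `Kˣ`, a character of `Eˣ`
therefore factors through it exactly when it is fixed by `Gal(E/K)`. So the intermediate fields
through whose norm `η` factors are, by the Galois correspondence, those containing the fixed field
of the stabilizer of `η`, and there is a proper one among them exactly when this stabilizer is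
nontrivial. For finite fields it is a subgroup of the cyclic group generated by the Frobenius, and
regularity says that no smaller power of the Frobenius than its order fixes `η`.
-/

section Cyclic

open Finset groupCohomology

variable {G : Type*} [Group G]

lemma exists_pow_lt_orderOf [Finite G] {g : G} (hg : ∀ h, h ∈ Subgroup.zpowers g) (h : G) :
    ∃ i < orderOf g, g ^ i = h := by
  classical
  simpa using mem_zpowers_iff_mem_range_orderOf.1 (hg h)

lemma eq_bot_iff_pow_mul_inv_pow_mem_imp_eq [Finite G] {g : G}
    (hg : ∀ h, h ∈ Subgroup.zpowers g) (H : Subgroup G) :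
    H = ⊥ ↔ ∀ i < orderOf g, ∀ j < orderOf g, g ^ i * (g ^ j)⁻¹ ∈ H → i = j := by
  refine ⟨?_, fun hH => (Subgroup.eq_bot_iff_forall H).2 fun h hh => ?_⟩
  · rintro rfl i hi j hj hij
    exact pow_injOn_Iio_orderOf hi hj (mul_inv_eq_one.1 (Subgroup.mem_bot.1 hij))
  · obtain ⟨i, hi, rfl⟩ := exists_pow_lt_orderOf hg h
    rw [hH i hi 0 (orderOf_pos g) (by simpa using hh), pow_zero]

lemma prod_range_orderOf_pow [Fintype G] {A : Type*} [CommMonoid A] {g : G}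
    (hg : ∀ h, h ∈ Subgroup.zpowers g) (f : G → A) :
    ∏ i ∈ range (orderOf g), f (g ^ i) = ∏ h, f h := by
  classical
  rw [← IsCyclic.image_range_orderOf hg, prod_image]
  exact fun i hi j hj hij => pow_injOn_Iio_orderOf (mem_range.1 hi) (mem_range.1 hj) hij

variable {A : Type*} [CommGroup A] [MulDistribMulAction G A]

lemma semidirectProduct_mk_pow (a : A) (g : G) (n : ℕ) :
    (⟨a, g⟩ : A ⋊[MulDistribMulAction.toMulAut G A] G) ^ n =
      ⟨∏ i ∈ range n, g ^ i • a, g ^ n⟩ := by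
  induction n with
  | zero => ext <;> simp
  | succ n ih =>
    rw [pow_succ, ih, prod_range_succ, pow_succ]
    rfl

-- A 1-cocycle is the left component of a section of `A ⋊ G → G`, and such a section may be
-- prescribed on a generator as soon as the order of the generator allows it.
lemma exists_isMulCocycle₁_apply_eq {g : G} (hg : ∀ h, h ∈ Subgroup.zpowers g) {a : A}
    (ha : ∏ i ∈ range (orderOf g), g ^ i • a = 1) :
    ∃ f : G → A, IsMulCocycle₁ f ∧ f g = a := by
  let s : A ⋊[MulDistribMulAction.toMulAut G A] G := ⟨a, g⟩
  have hs : orderOf s ∣ orderOf g := orderOf_dvd_of_pow_eq_one <| by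
    rw [semidirectProduct_mk_pow, ha, pow_orderOf_eq_one]
    rfl
  let S := monoidHomOfForallMemZpowers hg hs
  have hSg : S g = s := monoidHomOfForallMemZpowers_apply_gen hg hs
  have hright : SemidirectProduct.rightHom.comp S = MonoidHom.id G :=
    (MonoidHom.eq_iff_eq_on_generator hg _ _).2 (congrArg SemidirectProduct.right hSg)
  refine ⟨fun h => (S h).left, fun h k => ?_, congrArg SemidirectProduct.left hSg⟩
  have hh : (S h).right = h := DFunLike.congr_fun hright h
  simp only [map_mul, SemidirectProduct.mul_left, hh, MulDistribMulAction.toMulAut_apply,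
    MulDistribMulAction.toMulEquiv_apply, mul_comm]

-- Mathlib's `groupCohomology.exists_div_of_norm_eq_one` is restricted to fields in `Type 0`.
lemma exists_smul_div_eq_of_norm_eq_one {K E : Type*} [Field K] [Field E] [Algebra K E]
    [FiniteDimensional K E] [IsGalois K E] {σ : Gal(E/K)}
    (hσ : ∀ τ, τ ∈ Subgroup.zpowers σ) {x : Eˣ} (hx : Algebra.norm K (x : E) = 1) :
    ∃ y : Eˣ, σ • y / y = x := by
  have hprod : ∏ i ∈ range (orderOf σ), σ ^ i • x = 1 := by
    rw [prod_range_orderOf_pow hσ (· • x)]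
    ext
    simpa [hx] using (Algebra.norm_eq_prod_automorphisms K (x : E)).symm
  obtain ⟨f, hf, rfl⟩ := exists_isMulCocycle₁_apply_eq hσ hprod
  obtain ⟨y, hy⟩ := isMulCoboundary₁_of_isMulCocycle₁_of_aut_to_units f hf
  exact ⟨y, hy σ⟩

end Cyclic

lemma exists_monoidHom_apply_eq_of_ker_le {G H M : Type*} [Group G] [Group H] [Monoid M]
    {f : G →* H} (hf : Function.Surjective f) {η : G →* M} (h : f.ker ≤ η.ker) :
    ∃ η' : H →* M, ∀ x, η x = η' (f x) := by
  let e := QuotientGroup.quotientKerEquivOfSurjective f hf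
  refine ⟨(QuotientGroup.lift f.ker η h).comp e.symm.toMonoidHom, fun x => ?_⟩
  have he : e.symm (f x) = (x : G ⧸ f.ker) := e.symm_apply_eq.2 rfl
  simp [he]

section Characters

variable {E M : Type*} [Field E] [Monoid M]

/-- The character `η` of `Eˣ` is of the form `η' ∘ N_{E/K}` for a character `η'` of `Kˣ`.
Characters may take values in any monoid. -/
def FactorsThroughNorm (K : Type*) [Field K] [Algebra K E] (η : Eˣ →* M) : Prop :=
  ∃ η' : Kˣ →* M, ∀ x : Eˣ, η x = η' (Units.map (Algebra.norm K) x)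

/-- The stabilizer of the character `η` of `Eˣ` under the action of `Gal(E/K)` on characters by
precomposition. -/
def galStabilizer (K : Type*) [Field K] [Algebra K E] (η : Eˣ →* M) : Subgroup Gal(E/K) where
  carrier := {σ | ∀ x : Eˣ, η (σ • x) = η x}
  mul_mem' {σ τ} hσ hτ x := by rw [mul_smul, hσ, hτ]
  one_mem' x := by rw [one_smul]
  inv_mem' {σ} hσ x := by rw [← hσ (σ⁻¹ • x), smul_inv_smul]

lemma mul_inv_mem_galStabilizer {K : Type*} [Field K] [Algebra K E] {η : Eˣ →* M}
    {σ τ : Gal(E/K)} : σ * τ⁻¹ ∈ galStabilizer K η ↔ ∀ x : Eˣ, η (σ • x) = η (τ • x) := by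
  refine ⟨fun h x => ?_, fun h x => ?_⟩
  · simpa only [mul_smul, inv_smul_smul] using h (τ • x)
  · rw [mul_smul, h, smul_inv_smul]

lemma FactorsThroughNorm.galStabilizer_eq_top {K : Type*} [Field K] [Algebra K E] {η : Eˣ →* M}
    (h : FactorsThroughNorm K η) : galStabilizer K η = ⊤ := by
  obtain ⟨η', hη⟩ := h
  refine (Subgroup.eq_top_iff' _).2 fun σ x => ?_
  have hnorm : Units.map (Algebra.norm K) (σ • x) = Units.map (Algebra.norm K) x :=
    Units.ext (Algebra.norm_eq_of_algEquiv σ (x : E))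
  rw [hη, hη, hnorm]

lemma factorsThroughNorm_iff_galStabilizer_eq_top {K : Type*} [Field K] [Algebra K E]
    [FiniteDimensional K E] [IsGalois K E] [IsCyclic Gal(E/K)]
    (hK : Function.Surjective (Units.map (Algebra.norm K (S := E)))) {η : Eˣ →* M} :
    FactorsThroughNorm K η ↔ galStabilizer K η = ⊤ := by
  refine ⟨FactorsThroughNorm.galStabilizer_eq_top, fun h => ?_⟩
  refine exists_monoidHom_apply_eq_of_ker_le hK fun x hx => ?_
  obtain ⟨σ, hσ⟩ := IsCyclic.exists_generator (α := Gal(E/K))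
  obtain ⟨y, rfl⟩ := exists_smul_div_eq_of_norm_eq_one hσ (congrArg Units.val hx)
  have hy : η (σ • y) = η y := (Subgroup.eq_top_iff' _).1 h σ y
  rw [MonoidHom.mem_ker, div_eq_mul_inv, map_mul, hy, ← map_mul, mul_inv_cancel, map_one]

variable {F : Type*} [Field F] [Algebra F E]

lemma galStabilizer_eq_top_iff_fixingSubgroup_le {K : IntermediateField F E} {η : Eˣ →* M} :
    galStabilizer K η = ⊤ ↔ K.fixingSubgroup ≤ galStabilizer F η := by
  rw [Subgroup.eq_top_iff', K.fixingSubgroupEquiv.surjective.forall, Subtype.forall]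
  rfl

lemma isCyclic_gal_intermediateField [IsCyclic Gal(E/F)] (K : IntermediateField F E) :
    IsCyclic Gal(E/K) :=
  isCyclic_of_surjective K.fixingSubgroupEquiv K.fixingSubgroupEquiv.surjective

theorem galStabilizer_eq_bot_iff_not_exists_factorsThroughNorm [FiniteDimensional F E]
    [IsGalois F E] [IsCyclic Gal(E/F)]
    (hN : ∀ K : IntermediateField F E,
      Function.Surjective (Units.map (Algebra.norm K (S := E)))) {η : Eˣ →* M} :
    galStabilizer F η = ⊥ ↔ ¬ ∃ K : IntermediateField F E, K ≠ ⊤ ∧ FactorsThroughNorm K η := by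
  have hfactor (K : IntermediateField F E) :
      FactorsThroughNorm K η ↔ K.fixingSubgroup ≤ galStabilizer F η := by
    have := isCyclic_gal_intermediateField K
    rw [factorsThroughNorm_iff_galStabilizer_eq_top (hN K),
      galStabilizer_eq_top_iff_fixingSubgroup_le]
  have hbot (K : IntermediateField F E) : K.fixingSubgroup = ⊥ ↔ K = ⊤ := by
    rw [← IsGalois.fixedField_eq_iff_fixingSubgroup_eq, IntermediateField.fixedField_bot, eq_comm]
  simp only [hfactor, not_exists, not_and', not_not, ← hbot]
  refine ⟨fun h K hK => le_bot_iff.1 (hK.trans h.le), fun h => ?_⟩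
  simpa only [IntermediateField.fixingSubgroup_fixedField, le_refl, forall_const] using
    h (IntermediateField.fixedField (galStabilizer F η))

end Characters

section FiniteField

variable {F E M : Type*} [Field F] [Field E] [Finite E] [Algebra F E] [Monoid M]

lemma frobenius_pow_smul_units [Fintype F] (i : ℕ) (x : Eˣ) :
    FiniteField.frobeniusAlgEquivOfAlgebraic F E ^ i • x = x ^ Fintype.card F ^ i := by
  ext
  simp [AlgEquiv.coe_pow, FiniteField.coe_frobeniusAlgEquivOfAlgebraic_iterate]

lemma mem_zpowers_frobenius [Fintype F] (σ : Gal(E/F)) :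
    σ ∈ Subgroup.zpowers (FiniteField.frobeniusAlgEquivOfAlgebraic F E) := by
  obtain ⟨i, rfl⟩ := (FiniteField.bijective_frobeniusAlgEquivOfAlgebraic_pow F E).surjective σ
  exact Subgroup.npow_mem_zpowers _ _

lemma regular_iff_galStabilizer_eq_bot (η : Eˣ →* M) :
    (∀ i < Module.finrank F E, ∀ j < Module.finrank F E,
      (∀ x : Eˣ, η (x ^ Nat.card F ^ i) = η (x ^ Nat.card F ^ j)) → i = j) ↔
      galStabilizer F η = ⊥ := by
  have := Finite.of_injective _ (algebraMap F E).injective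
  have := Fintype.ofFinite F
  simp only [eq_bot_iff_pow_mul_inv_pow_mem_imp_eq mem_zpowers_frobenius,
    mul_inv_mem_galStabilizer, frobenius_pow_smul_units,
    FiniteField.orderOf_frobeniusAlgEquivOfAlgebraic, Nat.card_eq_fintype_card]

theorem regular_iff_not_norm_factor_general (η : Eˣ →* M) :
    (∀ i < Module.finrank F E, ∀ j < Module.finrank F E,
      (∀ x : Eˣ, η (x ^ Nat.card F ^ i) = η (x ^ Nat.card F ^ j)) → i = j) ↔
      ¬ ∃ (K : IntermediateField F E) (η' : (↥K)ˣ →* M), K ≠ ⊤ ∧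
        ∀ x : Eˣ, η x = η' (Units.map (Algebra.norm ↥K) x) := by
  simp only [exists_and_left]
  exact (regular_iff_galStabilizer_eq_bot η).trans <|
    galStabilizer_eq_bot_iff_not_exists_factorsThroughNorm fun K =>
      FiniteField.unitsMap_norm_surjective K E

end FiniteField

theorem regular_iff_not_norm_factor
    (F : Type*) [Field F] [Fintype F]
    (E : Type*) [Field E] [Fintype E] [Algebra F E]
    (q n : ℕ) (hq : Fintype.card F = q) (hn : Module.finrank F E = n)
    (η : Eˣ →* ℂˣ) :
    (∀ i < n, ∀ j < n, (∀ x : Eˣ, η (x ^ q ^ i) = η (x ^ q ^ j)) → i = j) ↔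
      ¬ ∃ (K : IntermediateField F E) (η' : (↥K)ˣ →* ℂˣ), K ≠ ⊤ ∧
        ∀ x : Eˣ, η x = η' (Units.map (Algebra.norm ↥K) x) := by
  subst hq hn
  simpa only [Nat.card_eq_fintype_card] using regular_iff_not_norm_factor_general (F := F) η

end Stmt3
end
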